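/- arXiv:2105.14883 — 2 statements merged into one kernel-verified Lean document; each statement's English description precedes it below -/
import Mathlib

section
/- For all positive integers i and j, the number C(i,j,0) of connected unicyclic bipartite graphs with labelled partition classes of sizes i and j (and hence i + j edges) satisfies C(i,j,0) = (1/2) · i^{j−1} · j^{i−1} · Σ_{r=2}^{min{i,j}} ( (i)_r (j)_r / (i^r j^r) ) · (i + j − r), where (x)_r = x(x−1)⋯(x−r+1) denotes the falling factorial. -/
open Filter Real

noncomputable section

/-- `bipGraphCount i j m` is the number of connected bipartite graphs with labelled partition
classes of sizes `i` and `j` (no edges within either class) and exactly `m` edges. -/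
def bipGraphCount (i j m : ℕ) : ℕ :=
  {G : SimpleGraph (Fin i ⊕ Fin j) |
    G.Connected ∧
    (∀ a b : Fin i, ¬ G.Adj (Sum.inl a) (Sum.inl b)) ∧
    (∀ a b : Fin j, ¬ G.Adj (Sum.inr a) (Sum.inr b)) ∧
    G.edgeSet.ncard = m}.ncard

end

/-!
Orienting the edges of a connected unicyclic graph along its cycle and towards it turns the graph
into the functional graph of a self-map `h`; the two directions of the cycle give exactly two such
`h`. If the graph is bipartite on `A ⊕ B`, where `A` and `B` have sizes `i` and `j`, then `h`
consists of maps `α : A → B` and `β : B → A`, and it is connected with a cycle of length `2 r`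
exactly when `α ∘ β` is connected with a cycle of length `r ≥ 2`. To count these pairs, mark a point
on the cycle: there are `(i)_r (j)_r` marked cycles. Given the cycle and `α`, the lemma of Burtin
and Ross says that a proportion `m / i` of the remaining choices of `β` makes every orbit of `α ∘ β`
reach the cycle, where `m` is the number of `a : A` with `α a` on the cycle, and the average of `m`
over `α` is `r + (i - r) r / j = r (i + j - r) / j`.
-/

section

open Function Finset

section Orbits

variable {V : Type*} {h : V → V}

/-- Any two orbits of `h` meet; equivalently, the functional graph of `h` is connected. -/
def OrbitsMeet (h : V → V) : Prop := ∀ v w, ∃ m n, h^[m] v = h^[n] w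

/-- Every orbit of `h` hits `R`. When the values of `h` on `R` are ignored, such maps are the
spanning forests of `V` with root set `R`, each vertex pointing to its parent. -/
def OrbitsReach (h : V → V) (R : Set V) : Prop := ∀ v, ∃ n, h^[n] v ∈ R

lemma nonempty_periodicPts [Finite V] [Nonempty V] (h : V → V) : (periodicPts h).Nonempty := by
  obtain ⟨v⟩ := ‹Nonempty V›
  obtain ⟨m, -, n, -, hlt, hmn⟩ :=
    Set.infinite_univ.exists_lt_map_eq_of_mapsTo (f := fun n : ℕ ↦ h^[n] v)
      (Set.mapsTo_univ _ _) Set.finite_univ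
  refine ⟨h^[m] v, mk_mem_periodicPts (Nat.sub_pos_of_lt hlt) ?_⟩
  rw [IsPeriodicPt, IsFixedPt, ← iterate_add_apply, Nat.sub_add_cancel hlt.le, ← hmn]

lemma OrbitsMeet.exists_iterate_eq (hh : OrbitsMeet h) {c : V} (hc : c ∈ periodicPts h) (v : V) :
    ∃ n, h^[n] v = c := by
  obtain ⟨p, hp, hpc⟩ := hc
  obtain ⟨m, n, hmn⟩ := hh v c
  refine ⟨(p * n - n) + m, ?_⟩
  rw [iterate_add_apply, hmn, ← iterate_add_apply,
    Nat.sub_add_cancel (Nat.le_mul_of_pos_left n hp)]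
  exact hpc.mul_const n

lemma orbitsReach_iff_forall_mapsTo {R : Set V} :
    OrbitsReach h R ↔ ∀ C : Set V, Set.MapsTo h C C → Disjoint C R → C = ∅ := by
  constructor
  · refine fun hR C hC hCR ↦ Set.eq_empty_of_forall_notMem fun v hv ↦ ?_
    obtain ⟨n, hn⟩ := hR v
    exact Set.disjoint_left.1 hCR (hC.iterate n hv) hn
  · intro hR v
    by_contra! hv
    have horbit : Set.range (fun n ↦ h^[n] v) = ∅ := by
      refine hR _ ?_ ?_
      · rintro _ ⟨n, rfl⟩
        exact ⟨n + 1, iterate_succ_apply' h n v⟩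
      · rw [Set.disjoint_left]
        rintro _ ⟨n, rfl⟩
        exact hv n
    exact Set.range_eq_empty_iff.1 horbit |>.false 0

/-- The self-map obtained from `h` by contracting the edge from `v` to `h v`: whatever pointed to
`v` now points to `h v`. -/
def contract [DecidableEq V] (h : V → V) (v w : V) : V := if h w = v then h v else h w

lemma orbitsReach_iff_contract [DecidableEq V] {R : Set V} {v : V} (hv : v ∉ R) :
    OrbitsReach h R ↔ h v ≠ v ∧ OrbitsReach (contract h v) (insert v R) := by
  simp only [orbitsReach_iff_forall_mapsTo]
  constructor
  · intro hR
    refine ⟨fun hfix ↦ ?_, fun C hC hCR ↦ ?_⟩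
    · exact Set.singleton_ne_empty v (hR {v} (by simpa using hfix) (by simpa using hv))
    · rw [Set.disjoint_insert_right] at hCR
      have hclosed : Set.MapsTo h (C ∪ {w | w = v ∧ h v ∈ C}) (C ∪ {w | w = v ∧ h v ∈ C}) := by
        rintro w (hw | ⟨rfl, hw⟩)
        · have hw' := hC hw
          grind [contract]
        · exact Or.inl hw
      have hempty := hR _ hclosed (by
        rw [Set.disjoint_union_left]
        exact ⟨hCR.2, Set.disjoint_left.2 fun w hw ↦ hw.1 ▸ hv⟩)
      exact (Set.union_empty_iff.1 hempty).1
  · rintro ⟨hfix, hR⟩ C hC hCR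
    have hclosed : Set.MapsTo (contract h v) (C \ {v}) (C \ {v}) := by
      rintro w ⟨hw, -⟩
      have hw' := hC hw
      unfold contract
      split_ifs with hwv
      · exact ⟨hC (hwv ▸ hw'), hfix⟩
      · exact ⟨hw', hwv⟩
    have hempty := hR _ hclosed (by
      rw [Set.disjoint_insert_right]
      exact ⟨by simp, hCR.mono_left Set.sdiff_subset⟩)
    rw [Set.sdiff_eq_empty] at hempty
    refine Set.eq_empty_of_forall_notMem fun w hw ↦ hfix ?_
    obtain rfl : w = v := hempty hw
    exact hempty (hC hw)

end Orbits

section FunctionalGraph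

variable {V : Type*} {h : V → V}

/-- The simple graph with an edge between `v` and `h v` for every `v`. -/
def functionalGraph (h : V → V) : SimpleGraph V := SimpleGraph.fromRel fun v w ↦ h v = w

lemma functionalGraph_adj {v w : V} :
    (functionalGraph h).Adj v w ↔ v ≠ w ∧ (h v = w ∨ h w = v) := Iff.rfl

lemma functionalGraph_connected_iff [Nonempty V] :
    (functionalGraph h).Connected ↔ OrbitsMeet h := by
  constructor
  · intro hc v w
    obtain ⟨p⟩ := hc.preconnected v w
    induction p with
    | nil => exact ⟨0, 0, rfl⟩
    | cons hadj _ ih =>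
      obtain ⟨m, n, hmn⟩ := ih
      rcases hadj.2 with rfl | rfl
      · exact ⟨m + 1, n, hmn⟩
      · refine ⟨m, n + 1, ?_⟩
        rw [iterate_succ_apply', ← hmn, ← iterate_succ_apply, iterate_succ_apply']
  · intro hm
    have reachable_iterate (v : V) (n : ℕ) : (functionalGraph h).Reachable v (h^[n] v) := by
      induction n with
      | zero => rfl
      | succ n ih =>
        rw [iterate_succ_apply']
        by_cases hfix : h^[n] v = h (h^[n] v)
        · rwa [← hfix]
        · exact ih.trans (SimpleGraph.Adj.reachable ⟨hfix, Or.inl rfl⟩)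
    refine ⟨fun v w ↦ ?_⟩
    obtain ⟨m, n, hmn⟩ := hm v w
    exact (reachable_iterate v m).trans (hmn ▸ (reachable_iterate w n).symm)

lemma edgeSet_functionalGraph (hfix : ∀ v, h v ≠ v) :
    (functionalGraph h).edgeSet = Set.range fun v ↦ s(v, h v) := by
  ext e
  induction e with
  | h a b =>
    simp only [SimpleGraph.mem_edgeSet, functionalGraph_adj, Set.mem_range, Sym2.eq_iff]
    grind

lemma ncard_edgeSet_functionalGraph (h2 : ∀ v, h (h v) ≠ v) :
    (functionalGraph h).edgeSet.ncard = Nat.card V := by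
  have hfix (v : V) : h v ≠ v := fun hv ↦ h2 v (by rw [hv, hv])
  rw [edgeSet_functionalGraph hfix, ← Set.image_univ, Set.ncard_image_of_injective _ ?_,
    Set.ncard_univ]
  intro v w hvw
  rcases Sym2.eq_iff.1 hvw with ⟨hvw, -⟩ | ⟨rfl, hvw⟩
  · exact hvw
  · exact absurd hvw (h2 w)

lemma exists_adj_dist_lt {G : SimpleGraph V} (hG : G.Connected) {u w : V} (hw : w ≠ u) :
    ∃ p, G.Adj w p ∧ G.dist p u < G.dist w u := by
  obtain ⟨Q, -, hlen⟩ := hG.exists_path_of_dist w u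
  cases Q with
  | nil => exact absurd rfl hw
  | cons hadj Q =>
    refine ⟨_, hadj, (SimpleGraph.dist_le Q).trans_lt ?_⟩
    rw [← hlen, SimpleGraph.Walk.length_cons]
    exact Nat.lt_succ_self _

/-- Send `u` to `v`, and every other vertex to a `T`-neighbour closer to `u`. -/
lemma exists_functionalGraph_le {G T : SimpleGraph V} (hT : T.Connected) (hTG : T ≤ G) {u v : V}
    (huv : G.Adj u v) (hTuv : ¬ T.Adj u v) :
    ∃ h : V → V, (∀ w, h (h w) ≠ w) ∧ functionalGraph h ≤ G := by
  classical
  choose! parent hadj hdist using fun w (hw : w ≠ u) ↦ exists_adj_dist_lt hT hw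
  refine ⟨update parent u v, fun w ↦ ?_, ?_⟩
  · rcases eq_or_ne w u with rfl | hw
    · rw [update_self, update_of_ne huv.ne']
      exact fun hvw ↦ hTuv (hvw ▸ (hadj v huv.ne').symm)
    rw [update_of_ne hw]
    rcases eq_or_ne (parent w) u with hp | hp
    · rw [hp, update_self]
      rintro rfl
      exact hTuv (hp ▸ (hadj v hw).symm)
    · rw [update_of_ne hp]
      intro hpw
      have hlt := hdist (parent w) hp
      rw [hpw] at hlt
      exact hlt.asymm (hdist w hw)
  · have hG_adj (w : V) : G.Adj w (update parent u v w) := by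
      rcases eq_or_ne w u with rfl | hw
      · rwa [update_self]
      · rw [update_of_ne hw]
        exact hTG (hadj w hw)
    rintro a b ⟨-, rfl | rfl⟩
    exacts [hG_adj a, (hG_adj b).symm]

lemma exists_adj_not_isBridge [Finite V] {G : SimpleGraph V} (hG : G.Connected)
    (hcard : G.edgeSet.ncard = Nat.card V) : ∃ u v, G.Adj u v ∧ ¬ G.IsBridge s(u, v) := by
  by_contra! hall
  have htree : G.IsTree := ⟨hG, SimpleGraph.isAcyclic_iff_forall_adj_isBridge.2 hall⟩
  have hcard_tree := (SimpleGraph.isTree_iff_connected_and_card.1 htree).2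
  rw [Nat.card_coe_set_eq] at hcard_tree
  omega

lemma exists_functionalGraph_eq [Finite V] {G : SimpleGraph V} (hG : G.Connected)
    (hcard : G.edgeSet.ncard = Nat.card V) :
    ∃ h : V → V, (∀ v, h (h v) ≠ v) ∧ functionalGraph h = G := by
  obtain ⟨u, v, huv, hbridge⟩ := exists_adj_not_isBridge hG hcard
  obtain ⟨h, h2, hle⟩ := exists_functionalGraph_le
    (hG.connected_delete_edge_of_not_isBridge hbridge) (SimpleGraph.deleteEdges_le _) huv (by simp)
  refine ⟨h, h2, SimpleGraph.edgeSet_injective ?_⟩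
  exact Set.eq_of_subset_of_ncard_le (SimpleGraph.edgeSet_subset_edgeSet.2 hle)
    (by rw [hcard, ncard_edgeSet_functionalGraph h2])

open Classical in
/-- The map `h` with all its cycles reversed. -/
noncomputable def reverseCycles (h : V → V) (v : V) : V :=
  if v ∈ periodicPts h then h^[minimalPeriod h v - 1] v else h v

lemma reverseCycles_of_notMem {v : V} (hv : v ∉ periodicPts h) : reverseCycles h v = h v :=
  if_neg hv

lemma reverseCycles_mem {v : V} (hv : v ∈ periodicPts h) :
    reverseCycles h v ∈ periodicPts h := by
  rw [reverseCycles, if_pos hv]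
  exact (bijOn_periodicPts h).mapsTo.iterate _ hv

lemma apply_reverseCycles {v : V} (hv : v ∈ periodicPts h) : h (reverseCycles h v) = v := by
  rw [reverseCycles, if_pos hv, ← iterate_succ_apply' h, Nat.succ_eq_add_one,
    Nat.sub_add_cancel (minimalPeriod_pos_of_mem_periodicPts hv), iterate_minimalPeriod]

lemma reverseCycles_apply {v : V} (hv : v ∈ periodicPts h) : reverseCycles h (h v) = v := by
  have hhv := (bijOn_periodicPts h).mapsTo hv
  exact (bijOn_periodicPts h).injOn (reverseCycles_mem hhv) hv (apply_reverseCycles hhv)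

lemma reverseCycles_reverseCycles_ne (h2 : ∀ v, h (h v) ≠ v) (v : V) :
    reverseCycles h (reverseCycles h v) ≠ v := by
  by_cases hv : v ∈ periodicPts h
  · intro hrev
    have hrev' := apply_reverseCycles (reverseCycles_mem hv)
    rw [hrev] at hrev'
    exact h2 v (by rw [hrev', apply_reverseCycles hv])
  · rw [reverseCycles_of_notMem hv]
    by_cases hhv : h v ∈ periodicPts h
    · exact fun heq ↦ hv (heq ▸ reverseCycles_mem hhv)
    · rw [reverseCycles_of_notMem hhv]
      exact h2 v

lemma functionalGraph_reverseCycles : functionalGraph (reverseCycles h) = functionalGraph h := by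
  have reverse_step (a : V) : h (reverseCycles h a) = a ∨ h a = reverseCycles h a := by
    by_cases ha : a ∈ periodicPts h
    exacts [Or.inl (apply_reverseCycles ha), Or.inr (reverseCycles_of_notMem ha).symm]
  have step (a : V) : reverseCycles h (h a) = a ∨ reverseCycles h a = h a := by
    by_cases ha : a ∈ periodicPts h
    exacts [Or.inl (reverseCycles_apply ha), Or.inr (reverseCycles_of_notMem ha)]
  ext a b
  simp only [functionalGraph_adj]
  grind

/-- The points where `h` and `h'` differ are swept out by orbits of `h`, along which `h'` inverts
`h`; these are either no points at all or exactly the cycle of `h`. -/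
lemma eq_reverseCycles_of_functionalGraph_eq [Finite V] [Nonempty V] {h' : V → V}
    (hm : OrbitsMeet h) (h2 : ∀ v, h (h v) ≠ v) (hgraph : functionalGraph h' = functionalGraph h)
    (hne : h' ≠ h) :
    h' = reverseCycles h := by
  set D : Set V := {v | h' v ≠ h v}
  have inverse {v : V} (hv : v ∈ D) : h' (h v) = v := by
    have hadj : (functionalGraph h').Adj v (h v) :=
      hgraph ▸ ⟨fun hfix ↦ h2 v (by rw [← hfix, ← hfix]), Or.inl rfl⟩
    exact hadj.2.resolve_left hv
  have mapsTo : Set.MapsTo h D D := fun v hv heq ↦ h2 v (heq ▸ inverse hv)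
  have D_subset : D ⊆ periodicPts h := by
    have hinj : Injective (mapsTo.restrict h D D) := fun v w hvw ↦ Subtype.ext <| by
      rw [← inverse v.2, ← inverse w.2]
      exact congrArg h' (Subtype.ext_iff.1 hvw)
    intro v hv
    have hsemi : Semiconj (Subtype.val : D → V) (mapsTo.restrict h D D) h := fun _ ↦ rfl
    exact hsemi.mapsTo_periodicPts (hinj.mem_periodicPts ⟨v, hv⟩)
  obtain ⟨d, hd⟩ : D.Nonempty := Function.ne_iff.1 hne
  have subset_D : periodicPts h ⊆ D := by
    intro c hc
    obtain ⟨n, rfl⟩ := hm.exists_iterate_eq hc d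
    exact mapsTo.iterate n hd
  funext v
  by_cases hv : v ∈ periodicPts h
  · rw [← inverse (subset_D (reverseCycles_mem hv)), apply_reverseCycles hv]
  · rw [reverseCycles_of_notMem hv]
    exact not_not.1 fun hvD ↦ hv (D_subset hvD)

theorem ncard_functionalGraph_eq [Finite V] {G : SimpleGraph V} (hG : G.Connected)
    (hcard : G.edgeSet.ncard = Nat.card V) :
    {h : V → V | (∀ v, h (h v) ≠ v) ∧ functionalGraph h = G}.ncard = 2 := by
  have := hG.nonempty
  obtain ⟨h, h2, rfl⟩ := exists_functionalGraph_eq hG hcard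
  refine Set.ncard_eq_two.2 ⟨h, reverseCycles h, fun heq ↦ ?_, Set.ext fun h' ↦ ?_⟩
  · obtain ⟨c, hc⟩ := nonempty_periodicPts h
    exact h2 c ((congrArg h (congrFun heq c)).trans (apply_reverseCycles hc))
  · constructor
    · rintro ⟨-, hgraph⟩
      by_cases hne : h' = h
      · exact Or.inl hne
      · exact Or.inr (eq_reverseCycles_of_functionalGraph_eq
          (functionalGraph_connected_iff.1 hG) h2 hgraph hne)
    · rintro (rfl | rfl)
      · exact ⟨h2, rfl⟩
      · exact ⟨reverseCycles_reverseCycles_ne h2, functionalGraph_reverseCycles⟩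

theorem two_mul_ncard_unicyclic [Finite V] {𝒢 : Set (SimpleGraph V)}
    (h𝒢 : ∀ G ∈ 𝒢, G.Connected ∧ G.edgeSet.ncard = Nat.card V) :
    2 * 𝒢.ncard = {h : V → V | (∀ v, h (h v) ≠ v) ∧ functionalGraph h ∈ 𝒢}.ncard := by
  classical
  have := Fintype.ofFinite V
  rw [Set.ncard_eq_toFinset_card', Set.ncard_eq_toFinset_card',
    card_eq_sum_card_fiberwise (f := functionalGraph) (t := 𝒢.toFinset)
      (by simp +contextual [Set.MapsTo]),
    sum_const_nat (m := 2), mul_comm]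
  intro G hG
  rw [Set.mem_toFinset] at hG
  rw [← ncard_functionalGraph_eq (h𝒢 G hG).1 (h𝒢 G hG).2, ← Set.ncard_coe_finset]
  congr 1
  ext h
  simp only [coe_filter, Set.mem_toFinset, Set.mem_ofPred_eq]
  exact ⟨fun hh ↦ ⟨hh.1.1, hh.2⟩, fun hh ↦ ⟨⟨hh.1, hh.2 ▸ hG⟩, hh.2⟩⟩

end FunctionalGraph

section CountingMaps

variable {A B V Z : Type*} [DecidableEq A]

lemma forall_mem_insert_eq_update_iff {S : Finset A} {a : A} (ha : a ∉ S) {α α₀ : A → B} {b : B} :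
    (∀ a' ∈ insert a S, α a' = update α₀ a b a') ↔ (∀ a' ∈ S, α a' = α₀ a') ∧ α a = b := by
  grind [update_self, update_of_ne]

variable [DecidableEq B] [DecidableEq V] [Fintype A] [Fintype B] [Fintype Z]

lemma card_compl_insert_add_one {S : Finset A} {a : A} (ha : a ∉ S) :
    #(insert a S)ᶜ + 1 = #Sᶜ := by
  rw [compl_insert, card_erase_add_one (mem_compl.2 ha)]

lemma card_eqOn (S : Finset A) (α₀ : A → B) :
    #{α : A → B | ∀ a ∈ S, α a = α₀ a} = Fintype.card B ^ #Sᶜ := by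
  have hpi : ({α : A → B | ∀ a ∈ S, α a = α₀ a} : Finset (A → B)) =
      Fintype.piFinset fun a ↦ if a ∈ S then {α₀ a} else univ := by
    ext α
    simp only [mem_filter_univ, Fintype.mem_piFinset]
    exact forall_congr' fun a ↦ by split_ifs with ha <;> simp [ha]
  rw [hpi, Fintype.card_piFinset]
  simp [apply_ite card, prod_ite, filter_not, compl_eq_univ_sdiff]

lemma card_mul_card_eqOn_apply_mem {S : Finset A} {a : A} (ha : a ∉ S) (α₀ : A → B)
    (T : Finset B) :
    Fintype.card B * #{α : A → B | (∀ a' ∈ S, α a' = α₀ a') ∧ α a ∈ T} =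
      #T * Fintype.card B ^ #Sᶜ := by
  have hfiber (t : B) (ht : t ∈ T) :
      #{α ∈ ({α : A → B | (∀ a' ∈ S, α a' = α₀ a') ∧ α a ∈ T} : Finset _) | α a = t} =
        Fintype.card B ^ #(insert a S)ᶜ := by
    rw [← card_eqOn _ (update α₀ a t), filter_filter]
    congr 1
    ext α
    rw [mem_filter_univ, mem_filter_univ, forall_mem_insert_eq_update_iff ha]
    grind
  rw [card_eq_sum_card_fiberwise (f := fun α ↦ α a) (t := T) (by simp +contextual [Set.MapsTo]),
    sum_const_nat hfiber, ← card_compl_insert_add_one ha]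
  ring

lemma card_mul_sum_card_apply_mem {S : Finset A} {T : Finset B} {α₀ : A → B}
    (hα₀ : ∀ a ∈ S, α₀ a ∈ T) :
    Fintype.card B * ∑ α : A → B with ∀ a ∈ S, α a = α₀ a, #{a | α a ∈ T} =
      (#S * Fintype.card B + #Sᶜ * #T) * Fintype.card B ^ #Sᶜ := by
  set E : Finset (A → B) := {α | ∀ a ∈ S, α a = α₀ a} with hE
  have hS (a : A) (ha : a ∈ S) :
      Fintype.card B * #{α ∈ E | α a ∈ T} = Fintype.card B * Fintype.card B ^ #Sᶜ := by
    rw [filter_true_of_mem, card_eqOn]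
    intro α hα
    rw [mem_filter_univ] at hα
    exact hα a ha ▸ hα₀ a ha
  have hSc (a : A) (ha : a ∈ Sᶜ) :
      Fintype.card B * #{α ∈ E | α a ∈ T} = #T * Fintype.card B ^ #Sᶜ := by
    rw [hE, filter_filter, card_mul_card_eqOn_apply_mem (mem_compl.1 ha)]
  have hswap := sum_card_bipartiteAbove_eq_sum_card_bipartiteBelow (s := E) (t := univ)
    fun α a ↦ α a ∈ T
  simp only [bipartiteAbove, bipartiteBelow] at hswap
  rw [hswap, mul_sum, ← sum_add_sum_compl S, sum_congr rfl hS, sum_congr rfl hSc, sum_const,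
    sum_const, smul_eq_mul, smul_eq_mul]
  ring

/-- Both sides count pairs `(z, z')`; the pairs with `f z = v` and `f z' ∈ R` missing on the left
are made up for by their mirror images. -/
lemma sum_card_redirect (f : Z → V) {R : Finset V} {v : V} (hv : v ∉ R) :
    ∑ z with f z ≠ v, #{z' | (if f z' = v then f z else f z') ∈ insert v R} =
      Fintype.card Z * #{z | f z ∈ R} := by
  classical
  have hcard (z : Z) (hz : f z ≠ v) :
      #{z' | (if f z' = v then f z else f z') ∈ insert v R} =
        #{z' | f z' ∈ R} + if f z ∈ R then #{z' | f z' = v} else 0 := by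
    have hdisj : Disjoint ({z' | f z' ∈ R} : Finset Z) ({z' | f z' = v} : Finset Z) :=
      disjoint_filter.2 fun z' _ hR h' ↦ hv (h' ▸ hR)
    split_ifs with hzR
    · rw [← card_union_of_disjoint hdisj]
      congr 1
      grind
    · congr 1
      grind
  have hroot : #{z ∈ ({z | f z ≠ v} : Finset Z) | f z ∈ R} = #{z | f z ∈ R} := by
    congr 1
    grind
  have hsplit : #{z | f z = v} + #{z | f z ≠ v} = Fintype.card Z :=
    card_filter_add_card_filter_not (s := univ) _
  rw [sum_congr rfl fun z hz ↦ hcard z (mem_filter_univ z |>.1 hz), sum_add_distrib, sum_const,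
    ← sum_filter, sum_const, hroot, ← hsplit, smul_eq_mul, smul_eq_mul]
  ring

variable [DecidableEq Z]

open Classical in
lemma card_orbitsReach_fiber [Fintype V] (f : Z → V) {R : Finset V} (β₀ : V → Z) {v : V}
    (hv : v ∉ R) (z : Z) :
    #{β ∈ ({β : V → Z | (∀ w ∈ R, β w = β₀ w) ∧ OrbitsReach (f ∘ β) (R : Set V)} : Finset _) |
        β v = z} =
      if f z ≠ v then
        #{β : V → Z | (∀ w ∈ insert v R, β w = update β₀ v z w) ∧
          OrbitsReach ((fun z' ↦ if f z' = v then f z else f z') ∘ β) (insert v R : Finset V)}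
      else 0 := by
  simp only [forall_mem_insert_eq_update_iff hv, filter_filter, coe_insert,
    orbitsReach_iff_contract (mem_coe.not.2 hv)]
  split_ifs with hz
  · congr 1
    ext β
    simp only [mem_filter_univ]
    constructor
    · rintro ⟨⟨hβ, -, hreach⟩, rfl⟩
      exact ⟨⟨hβ, rfl⟩, hreach⟩
    · rintro ⟨⟨hβ, rfl⟩, hreach⟩
      exact ⟨⟨hβ, hz, hreach⟩, rfl⟩
  · rw [card_eq_zero, filter_eq_empty_iff]
    rintro β - ⟨⟨-, hne, -⟩, rfl⟩
    exact hz hne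

open Classical in
/-- A form of the Burtin–Ross lemma; for `f = id` it counts the spanning forests with root set
`R`. Once `β v` is fixed at a non-root `v`, contracting the edge out of `v` makes `v` a root and
only changes `f`. -/
theorem card_mul_card_orbitsReach [Fintype V] (f : Z → V) (R : Finset V) (β₀ : V → Z) :
    Fintype.card Z * #{β : V → Z | (∀ v ∈ R, β v = β₀ v) ∧ OrbitsReach (f ∘ β) (R : Set V)} =
      #{z | f z ∈ R} * Fintype.card Z ^ #Rᶜ := by
  induction hk : #Rᶜ generalizing f R β₀ with
  | zero =>
    obtain rfl : R = univ := by simpa using hk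
    have hreach (β : V → Z) : OrbitsReach (f ∘ β) Set.univ := fun _ ↦ ⟨0, trivial⟩
    have := card_eqOn univ β₀
    simp_all
  | succ k ih =>
    obtain ⟨v, hv⟩ : Rᶜ.Nonempty := card_pos.1 (by omega)
    rw [mem_compl] at hv
    have hk' : #(insert v R)ᶜ = k := by have := card_compl_insert_add_one hv; omega
    rw [card_eq_sum_card_fiberwise (f := fun β ↦ β v) (t := univ) (by simp [Set.MapsTo]),
      sum_congr rfl fun z _ ↦ card_orbitsReach_fiber f β₀ hv z, ← sum_filter, mul_sum,
      sum_congr rfl fun z _ ↦ ih _ _ _ hk', ← sum_mul, sum_card_redirect f hv]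
    ring

open Classical in
theorem card_mul_card_pairs_orbitsReach {S : Finset A} {T : Finset B} {α₀ : A → B}
    (hα₀ : ∀ a ∈ S, α₀ a ∈ T) (β₀ : B → A) :
    Fintype.card A * Fintype.card B *
        #{p : (A → B) × (B → A) | (∀ a ∈ S, p.1 a = α₀ a) ∧ (∀ b ∈ T, p.2 b = β₀ b) ∧
          OrbitsReach (p.1 ∘ p.2) (T : Set B)} =
      (#S * Fintype.card B + #Sᶜ * #T) * Fintype.card B ^ #Sᶜ * Fintype.card A ^ #Tᶜ := by
  have hpairs : #{p : (A → B) × (B → A) | (∀ a ∈ S, p.1 a = α₀ a) ∧ (∀ b ∈ T, p.2 b = β₀ b) ∧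
        OrbitsReach (p.1 ∘ p.2) (T : Set B)} =
      ∑ α : A → B with ∀ a ∈ S, α a = α₀ a,
        #{β : B → A | (∀ b ∈ T, β b = β₀ b) ∧ OrbitsReach (α ∘ β) (T : Set B)} := by
    rw [← card_sigma]
    refine card_equiv (Equiv.sigmaEquivProd _ _).symm fun p ↦ ?_
    simp
  calc _ = Fintype.card B * ∑ α : A → B with ∀ a ∈ S, α a = α₀ a, Fintype.card A *
        #{β : B → A | (∀ b ∈ T, β b = β₀ b) ∧ OrbitsReach (α ∘ β) (T : Set B)} := by
        rw [hpairs, ← mul_sum]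
        ring
    _ = Fintype.card B * ∑ α : A → B with ∀ a ∈ S, α a = α₀ a, #{a | α a ∈ T} *
          Fintype.card A ^ #Tᶜ :=
        congrArg _ (sum_congr rfl fun α _ ↦ card_mul_card_orbitsReach α T β₀)
    _ = _ := by rw [← sum_mul, ← mul_assoc, card_mul_sum_card_apply_mem hα₀]

end CountingMaps

section MarkedCycles

-- A cycle of length `r` of `p` with a marked point is an embedding `y : ZMod r ↪ V` that
-- semiconjugates the successor map of `ZMod r` to `p`.
variable {V : Type*} {p : V → V} {r : ℕ}

lemma iterate_apply_of_semiconj_add_one {y : ZMod r → V} (hy : Semiconj y (· + 1) p) (n : ℕ)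
    (k : ZMod r) : p^[n] (y k) = y (k + n) := by
  rw [← hy.iterate_right n k, add_right_iterate, nsmul_one]

variable [NeZero r]

lemma range_subset_periodicPts {y : ZMod r → V} (hy : Semiconj y (· + 1) p) :
    Set.range y ⊆ periodicPts p := by
  rintro _ ⟨k, rfl⟩
  refine mk_mem_periodicPts (NeZero.pos r) ?_
  rw [IsPeriodicPt, IsFixedPt, iterate_apply_of_semiconj_add_one hy, ZMod.natCast_self, add_zero]

lemma OrbitsMeet.periodicPts_eq_range (hp : OrbitsMeet p) {y : ZMod r → V}
    (hy : Semiconj y (· + 1) p) : periodicPts p = Set.range y := by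
  refine (Set.Subset.antisymm · (range_subset_periodicPts hy)) fun c hc ↦ ?_
  obtain ⟨n, rfl⟩ := hp.exists_iterate_eq hc (y 0)
  exact ⟨_, (iterate_apply_of_semiconj_add_one hy n 0).symm⟩

lemma orbitsMeet_iff_orbitsReach_range {y : ZMod r → V} (hy : Semiconj y (· + 1) p) :
    OrbitsMeet p ↔ OrbitsReach p (Set.range y) := by
  constructor
  · intro hp v
    obtain ⟨n, hn⟩ := hp.exists_iterate_eq (range_subset_periodicPts hy ⟨0, rfl⟩) v
    exact ⟨n, 0, hn.symm⟩
  · intro hp v w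
    obtain ⟨m, k, hk⟩ := hp v
    obtain ⟨n, l, hl⟩ := hp w
    refine ⟨(l - k).val + m, n, ?_⟩
    rw [iterate_add_apply, ← hk, ← hl, iterate_apply_of_semiconj_add_one hy, ZMod.natCast_zmod_val,
      add_sub_cancel]

lemma exists_semiconj_add_one {b : V} (hb : minimalPeriod p b = r) :
    ∃ y : ZMod r ↪ V, Semiconj y (· + 1) p ∧ y 0 = b := by
  subst hb
  have hinj : Injective fun k : ZMod (minimalPeriod p b) ↦ p^[k.val] b := fun k l hkl ↦
    ZMod.val_injective _ (iterate_injOn_Iio_minimalPeriod k.val_lt l.val_lt hkl)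
  refine ⟨⟨_, hinj⟩, fun k ↦ ?_, by simp⟩
  simp only [Embedding.coeFn_mk]
  rw [ZMod.val_add, iterate_mod_minimalPeriod_eq, ZMod.val_one_eq_one_mod, ← iterate_succ_apply' p,
    ← iterate_mod_minimalPeriod_eq, Nat.add_mod_mod, iterate_mod_minimalPeriod_eq]

lemma OrbitsMeet.ncard_periodicPts (hp : OrbitsMeet p) {b : V} (hb : b ∈ periodicPts p) :
    (periodicPts p).ncard = minimalPeriod p b := by
  have : NeZero (minimalPeriod p b) := ⟨(minimalPeriod_pos_of_mem_periodicPts hb).ne'⟩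
  obtain ⟨y, hy, -⟩ := exists_semiconj_add_one (p := p) (b := b) rfl
  rw [hp.periodicPts_eq_range hy, ← Nat.card_coe_set_eq, Nat.card_range_of_injective y.injective,
    Nat.card_zmod]

lemma OrbitsMeet.forall_ne_iff_two_le_ncard [Finite V] [Nonempty V] (hp : OrbitsMeet p) :
    (∀ v, p v ≠ v) ↔ 2 ≤ (periodicPts p).ncard := by
  constructor
  · intro hfix
    obtain ⟨c, hc⟩ := nonempty_periodicPts p
    have hpos := minimalPeriod_pos_of_mem_periodicPts hc
    have hne : minimalPeriod p c ≠ 1 := fun h1 ↦ hfix c (minimalPeriod_eq_one_iff_isFixedPt.1 h1)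
    rw [hp.ncard_periodicPts hc]
    omega
  · intro hcard v hv
    have hfix : IsFixedPt p v := hv
    rw [hp.ncard_periodicPts (mk_mem_periodicPts one_pos hfix),
      minimalPeriod_eq_one_iff_isFixedPt.2 hfix] at hcard
    omega

open Classical in
lemma OrbitsMeet.card_semiconj_add_one [Fintype V] (hp : OrbitsMeet p)
    (hr : (periodicPts p).ncard = r) : #{y : ZMod r ↪ V | Semiconj y (· + 1) p} = r := by
  conv_rhs => rw [← hr, Set.ncard_eq_toFinset_card']
  refine card_bij (fun y _ ↦ y 0) (fun y hy ↦ ?_) (fun y hy z hz hyz ↦ ?_) fun b hb ↦ ?_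
  · rw [mem_filter_univ] at hy
    exact Set.mem_toFinset.2 (range_subset_periodicPts hy ⟨0, rfl⟩)
  · rw [mem_filter_univ] at hy hz
    ext k
    rw [← zero_add k, ← ZMod.natCast_zmod_val k, ← iterate_apply_of_semiconj_add_one hy, hyz,
      iterate_apply_of_semiconj_add_one hz]
  · rw [Set.mem_toFinset] at hb
    obtain ⟨y, hy, hy0⟩ := exists_semiconj_add_one ((hp.ncard_periodicPts hb).symm.trans hr)
    exact ⟨y, mem_filter_univ _ |>.2 hy, hy0⟩

end MarkedCycles

section PairsOfMaps

variable {A B : Type*} {r : ℕ}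

/-- `TracesCycle α β x y` says that `y 0, x 0, y 1, x 1, …` is a closed walk of length `2 * r`
alternately following `β` and `α`: a cycle of `α ∘ β` with a marked point, together with its image
under `β`. -/
def TracesCycle (α : A → B) (β : B → A) (x : ZMod r → A) (y : ZMod r → B) : Prop :=
  (∀ k, α (x k) = y (k + 1)) ∧ ∀ k, β (y k) = x k

lemma TracesCycle.semiconj {α : A → B} {β : B → A} {x : ZMod r → A} {y : ZMod r → B}
    (hxy : TracesCycle α β x y) : Semiconj y (· + 1) (α ∘ β) := fun k ↦ by
  rw [comp_apply, hxy.2, hxy.1]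

variable [Fintype A] [Fintype B]

open Classical in
variable (A B r) in
/-- The pairs of maps between `A` and `B` that form a connected functional graph on `A ⊕ B` with
cycle of length `2 * r`. -/
noncomputable def connectedPairs : Finset ((A → B) × (B → A)) :=
  {p | OrbitsMeet (p.1 ∘ p.2) ∧ (periodicPts (p.1 ∘ p.2)).ncard = r}

variable [NeZero r]

open Classical in
lemma card_tracesCycle {p : (A → B) × (B → A)} (hp : p ∈ connectedPairs A B r) :
    #{z : (ZMod r ↪ A) × (ZMod r ↪ B) | TracesCycle p.1 p.2 z.1 z.2} = r := by
  obtain ⟨hmeet, hr⟩ := mem_filter_univ _ |>.1 hp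
  conv_rhs => rw [← hmeet.card_semiconj_add_one hr]
  refine card_bij (fun z _ ↦ z.2) (fun z hz ↦ ?_) (fun z hz z' hz' heq ↦ ?_) fun y hy ↦ ?_
  · exact mem_filter_univ _ |>.2 (mem_filter_univ _ |>.1 hz).semiconj
  · rw [mem_filter_univ] at hz hz'
    refine Prod.ext (Embedding.ext fun k ↦ ?_) heq
    rw [← hz.2, ← hz'.2, heq]
  · rw [mem_filter_univ] at hy
    have hinj : Injective (p.2 ∘ y) := fun k l hkl ↦
      add_right_cancel (y.injective ((hy k).trans ((congrArg p.1 hkl).trans (hy l).symm)))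
    exact ⟨⟨⟨_, hinj⟩, y⟩, mem_filter_univ _ |>.2 ⟨fun k ↦ (hy k).symm, fun _ ↦ rfl⟩, rfl⟩

lemma le_min_card_of_mem_connectedPairs {p : (A → B) × (B → A)} (hp : p ∈ connectedPairs A B r) :
    r ≤ min (Fintype.card A) (Fintype.card B) := by
  obtain ⟨⟨x, y⟩, -⟩ := card_pos.1 ((NeZero.pos r).trans_eq (card_tracesCycle hp).symm)
  exact le_min (by simpa using Fintype.card_le_of_embedding x)
    (by simpa using Fintype.card_le_of_embedding y)

lemma mem_connectedPairs_and_tracesCycle_iff {x : ZMod r ↪ A} {y : ZMod r ↪ B} {α : A → B}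
    {β : B → A} :
    (α, β) ∈ connectedPairs A B r ∧ TracesCycle α β x y ↔
      (∀ a ∈ univ.map x, α a = extend x (fun k ↦ y (k + 1)) (fun _ ↦ y 0) a) ∧
        (∀ b ∈ univ.map y, β b = extend y x (fun _ ↦ x 0) b) ∧
          OrbitsReach (α ∘ β) (univ.map y : Finset B) := by
  have htraces : TracesCycle α β x y ↔
      (∀ a ∈ univ.map x, α a = extend x (fun k ↦ y (k + 1)) (fun _ ↦ y 0) a) ∧
        ∀ b ∈ univ.map y, β b = extend y x (fun _ ↦ x 0) b := by
    simp [TracesCycle, x.injective.extend_apply, y.injective.extend_apply]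
  rw [← and_assoc, ← htraces, and_comm]
  simp only [connectedPairs, mem_filter, mem_univ, true_and]
  refine and_congr_right fun hxy ↦ ?_
  rw [orbitsMeet_iff_orbitsReach_range hxy.semiconj, coe_map, coe_univ, Set.image_univ,
    and_iff_left_iff_imp, ← orbitsMeet_iff_orbitsReach_range hxy.semiconj]
  intro hmeet
  rw [hmeet.periodicPts_eq_range hxy.semiconj, ← Nat.card_coe_set_eq,
    Nat.card_range_of_injective y.injective, Nat.card_zmod]

open Classical in
lemma card_mul_card_connectedPairs_tracesCycle (x : ZMod r ↪ A) (y : ZMod r ↪ B) :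
    Fintype.card A * Fintype.card B * #{p ∈ connectedPairs A B r | TracesCycle p.1 p.2 x y} =
      r * ((Fintype.card A + Fintype.card B - r) * Fintype.card B ^ (Fintype.card A - r) *
        Fintype.card A ^ (Fintype.card B - r)) := by
  have hrA : r ≤ Fintype.card A := by simpa using Fintype.card_le_of_embedding x
  have hx (a : A) (ha : a ∈ univ.map x) :
      extend x (fun k ↦ y (k + 1)) (fun _ ↦ y 0) a ∈ univ.map y := by
    obtain ⟨k, -, rfl⟩ := mem_map.1 ha
    rw [x.injective.extend_apply]
    exact mem_map_of_mem y (mem_univ _)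
  have hcount := card_mul_card_pairs_orbitsReach hx (extend y x fun _ ↦ x 0)
  simp only [card_compl, card_map, card_univ, ZMod.card] at hcount
  have hfilter : ({p ∈ connectedPairs A B r | TracesCycle p.1 p.2 x y} : Finset _) =
      ({p | (∀ a ∈ univ.map x, p.1 a = extend x (fun k ↦ y (k + 1)) (fun _ ↦ y 0) a) ∧
        (∀ b ∈ univ.map y, p.2 b = extend y x (fun _ ↦ x 0) b) ∧
          OrbitsReach (p.1 ∘ p.2) (univ.map y : Finset B)} : Finset ((A → B) × (B → A))) := by
    ext p
    rw [mem_filter, mem_filter_univ, ← mem_connectedPairs_and_tracesCycle_iff]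
  rw [hfilter, hcount, Nat.sub_add_comm hrA]
  ring

theorem card_mul_card_connectedPairs :
    Fintype.card A * Fintype.card B * #(connectedPairs A B r) =
      (Fintype.card A).descFactorial r * (Fintype.card B).descFactorial r *
        ((Fintype.card A + Fintype.card B - r) * Fintype.card B ^ (Fintype.card A - r) *
          Fintype.card A ^ (Fintype.card B - r)) := by
  classical
  have hdouble := sum_card_bipartiteAbove_eq_sum_card_bipartiteBelow
    (s := connectedPairs A B r) (t := (univ : Finset ((ZMod r ↪ A) × (ZMod r ↪ B))))
    fun p z ↦ TracesCycle p.1 p.2 z.1 z.2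
  simp only [bipartiteAbove, bipartiteBelow] at hdouble
  rw [sum_const_nat fun p hp ↦ card_tracesCycle hp] at hdouble
  refine Nat.eq_of_mul_eq_mul_right (NeZero.pos r) ?_
  rw [mul_assoc, hdouble, mul_sum,
    sum_congr rfl fun z _ ↦ card_mul_card_connectedPairs_tracesCycle z.1 z.2, sum_const, card_univ,
    Fintype.card_prod, Fintype.card_embedding_eq, Fintype.card_embedding_eq, ZMod.card, smul_eq_mul]
  ring

end PairsOfMaps

section BipartiteGraphs

variable {A B : Type*}

/-- The self-map of the disjoint union glued from maps in both directions; its functional graph is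
bipartite. -/
def bipartiteMap (p : (A → B) × (B → A)) : A ⊕ B → A ⊕ B :=
  Sum.elim (Sum.inr ∘ p.1) (Sum.inl ∘ p.2)

/-- No edge of `G` joins two left vertices or two right vertices. -/
def IsBipartiteSum (G : SimpleGraph (A ⊕ B)) : Prop :=
  (∀ a a' : A, ¬ G.Adj (Sum.inl a) (Sum.inl a')) ∧ ∀ b b' : B, ¬ G.Adj (Sum.inr b) (Sum.inr b')

lemma bipartiteMap_injective : Injective (bipartiteMap (A := A) (B := B)) := fun _ _ hpq ↦
  Prod.ext (funext fun a ↦ Sum.inr_injective (congrFun hpq (Sum.inl a)))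
    (funext fun b ↦ Sum.inl_injective (congrFun hpq (Sum.inr b)))

lemma isBipartiteSum_functionalGraph_iff {h : A ⊕ B → A ⊕ B} (hfix : ∀ v, h v ≠ v) :
    IsBipartiteSum (functionalGraph h) ↔ ∃ p, bipartiteMap p = h := by
  constructor
  · rintro ⟨hA, hB⟩
    have adj_apply (v : A ⊕ B) : (functionalGraph h).Adj v (h v) := ⟨(hfix v).symm, Or.inl rfl⟩
    have hα (a : A) : ∃ b, h (Sum.inl a) = Sum.inr b := by
      rcases hv : h (Sum.inl a) with a' | b
      · exact absurd (hv ▸ adj_apply (Sum.inl a)) (hA a a')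
      · exact ⟨b, rfl⟩
    have hβ (b : B) : ∃ a, h (Sum.inr b) = Sum.inl a := by
      rcases hv : h (Sum.inr b) with a | b'
      · exact ⟨a, rfl⟩
      · exact absurd (hv ▸ adj_apply (Sum.inr b)) (hB b b')
    choose α hα using hα
    choose β hβ using hβ
    exact ⟨(α, β), funext <| Sum.rec (fun a ↦ (hα a).symm) fun b ↦ (hβ b).symm⟩
  · rintro ⟨p, rfl⟩
    constructor <;> simp [functionalGraph_adj, bipartiteMap]

lemma forall_bipartiteMap_bipartiteMap_ne_iff {p : (A → B) × (B → A)} :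
    (∀ v, bipartiteMap p (bipartiteMap p v) ≠ v) ↔ ∀ b, (p.1 ∘ p.2) b ≠ b := by
  refine ⟨fun h2 b hb ↦ h2 (Sum.inr b) (congrArg Sum.inr hb), fun hfix v hv ↦ ?_⟩
  rcases v with a | b
  · exact hfix (p.1 a) (congrArg p.1 (Sum.inl_injective hv))
  · exact hfix b (Sum.inr_injective hv)

/-- The map `Sum.elim p.1 id` moves a left vertex one step forward, so it carries orbits of
`bipartiteMap p` to orbits of `p.1 ∘ p.2`. -/
lemma exists_elim_iterate_bipartiteMap_eq (p : (A → B) × (B → A)) (v : A ⊕ B) (n : ℕ) :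
    ∃ k, Sum.elim p.1 id ((bipartiteMap p)^[n] v) = (p.1 ∘ p.2)^[k] (Sum.elim p.1 id v) := by
  induction n with
  | zero => exact ⟨0, rfl⟩
  | succ n ih =>
    obtain ⟨k, hk⟩ := ih
    rw [iterate_succ_apply']
    rcases hv : (bipartiteMap p)^[n] v with a | b <;> rw [hv] at hk
    · exact ⟨k, hk⟩
    · exact ⟨k + 1, (congrArg (p.1 ∘ p.2) hk).trans (iterate_succ_apply' _ k _).symm⟩

lemma orbitsMeet_bipartiteMap_iff {p : (A → B) × (B → A)} :
    OrbitsMeet (bipartiteMap p) ↔ OrbitsMeet (p.1 ∘ p.2) := by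
  constructor
  · intro hp b b'
    obtain ⟨m, n, hmn⟩ := hp (Sum.inr b) (Sum.inr b')
    obtain ⟨k, hk⟩ := exists_elim_iterate_bipartiteMap_eq p (Sum.inr b) m
    obtain ⟨l, hl⟩ := exists_elim_iterate_bipartiteMap_eq p (Sum.inr b') n
    exact ⟨k, l, hk.symm.trans ((congrArg _ hmn).trans hl)⟩
  · intro hp v w
    have hsemi : Semiconj Sum.inr (p.1 ∘ p.2) (bipartiteMap p)^[2] := fun _ ↦ rfl
    have reach_right (v : A ⊕ B) : ∃ n b, (bipartiteMap p)^[n] v = Sum.inr b := by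
      rcases v with a | b
      exacts [⟨1, p.1 a, rfl⟩, ⟨0, b, rfl⟩]
    obtain ⟨k, b, hb⟩ := reach_right v
    obtain ⟨l, c, hc⟩ := reach_right w
    obtain ⟨m, n, hmn⟩ := hp b c
    refine ⟨2 * m + k, 2 * n + l, ?_⟩
    rw [iterate_add_apply, iterate_add_apply, hb, hc, iterate_mul, iterate_mul,
      ← hsemi.iterate_right m b, ← hsemi.iterate_right n c, hmn]

variable [Fintype A] [Fintype B]

open Classical in
lemma card_orbitsMeet_eq_sum_card_connectedPairs [Nonempty B] :
    #{p : (A → B) × (B → A) | OrbitsMeet (p.1 ∘ p.2) ∧ ∀ b, (p.1 ∘ p.2) b ≠ b} =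
      ∑ r ∈ Icc 2 (min (Fintype.card A) (Fintype.card B)), #(connectedPairs A B r) := by
  have hmapsTo (p : (A → B) × (B → A)) (hp : OrbitsMeet (p.1 ∘ p.2) ∧ ∀ b, (p.1 ∘ p.2) b ≠ b) :
      (periodicPts (p.1 ∘ p.2)).ncard ∈ Icc 2 (min (Fintype.card A) (Fintype.card B)) := by
    have htwo := hp.1.forall_ne_iff_two_le_ncard.1 hp.2
    have : NeZero (periodicPts (p.1 ∘ p.2)).ncard := ⟨by omega⟩
    exact mem_Icc.2
      ⟨htwo, le_min_card_of_mem_connectedPairs (mem_filter_univ _ |>.2 ⟨hp.1, rfl⟩)⟩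
  rw [card_eq_sum_card_fiberwise fun p hp ↦ hmapsTo p (mem_filter.1 (mem_coe.1 hp)).2]
  refine sum_congr rfl fun r hr ↦ congrArg card ?_
  ext p
  simp only [connectedPairs, mem_filter, mem_univ, true_and]
  constructor
  · rintro ⟨⟨hp, -⟩, hcard⟩
    exact ⟨hp, hcard⟩
  · rintro ⟨hp, hcard⟩
    exact ⟨⟨hp, hp.forall_ne_iff_two_le_ncard.2 (hcard ▸ (mem_Icc.1 hr).1)⟩, hcard⟩

theorem two_mul_ncard_unicyclic_bipartite [Nonempty B] :
    2 * {G : SimpleGraph (A ⊕ B) | G.Connected ∧ IsBipartiteSum G ∧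
        G.edgeSet.ncard = Fintype.card A + Fintype.card B}.ncard =
      ∑ r ∈ Icc 2 (min (Fintype.card A) (Fintype.card B)), #(connectedPairs A B r) := by
  rw [two_mul_ncard_unicyclic fun G hG ↦ ⟨hG.1, by simp [hG.2.2]⟩,
    ← card_orbitsMeet_eq_sum_card_connectedPairs, ← Set.ncard_coe_finset,
    ← Set.ncard_image_of_injective _ bipartiteMap_injective]
  congr 1
  ext h
  simp only [Set.mem_ofPred_eq, Set.mem_image, mem_coe, mem_filter_univ,
    functionalGraph_connected_iff]
  constructor
  · rintro ⟨h2, hmeet, hbip, -⟩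
    have hfix (v : A ⊕ B) : h v ≠ v := fun hv ↦ h2 v (by rw [hv, hv])
    obtain ⟨p, rfl⟩ := (isBipartiteSum_functionalGraph_iff hfix).1 hbip
    exact ⟨p, ⟨orbitsMeet_bipartiteMap_iff.1 hmeet,
      forall_bipartiteMap_bipartiteMap_ne_iff.1 h2⟩, rfl⟩
  · rintro ⟨p, ⟨hmeet, hne⟩, rfl⟩
    have h2 := forall_bipartiteMap_bipartiteMap_ne_iff.2 hne
    have hfix (v : A ⊕ B) : bipartiteMap p v ≠ v := fun hv ↦ h2 v (by rw [hv, hv])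
    exact ⟨h2, orbitsMeet_bipartiteMap_iff.2 hmeet,
      (isBipartiteSum_functionalGraph_iff hfix).2 ⟨p, rfl⟩,
      by simp [ncard_edgeSet_functionalGraph h2]⟩

lemma cast_card_connectedPairs [Nonempty A] [Nonempty B] {r : ℕ} [NeZero r]
    (hr : r ≤ min (Fintype.card A) (Fintype.card B)) :
    (#(connectedPairs A B r) : ℝ) =
      (Fintype.card A : ℝ) ^ (Fintype.card B - 1) * (Fintype.card B : ℝ) ^ (Fintype.card A - 1) *
        ((Fintype.card A).descFactorial r * (Fintype.card B).descFactorial r /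
          ((Fintype.card A : ℝ) ^ r * (Fintype.card B : ℝ) ^ r) *
          (Fintype.card A + Fintype.card B - r)) := by
  have hcount :=
    congrArg (Nat.cast (R := ℝ)) (card_mul_card_connectedPairs (A := A) (B := B) (r := r))
  obtain ⟨hrA, hrB⟩ := le_min_iff.1 hr
  have hA : (Fintype.card A : ℝ) ≠ 0 := Nat.cast_ne_zero.2 Fintype.card_ne_zero
  have hB : (Fintype.card B : ℝ) ≠ 0 := Nat.cast_ne_zero.2 Fintype.card_ne_zero
  push_cast [Nat.cast_sub (hrA.trans (Nat.le_add_right _ (Fintype.card B)))] at hcount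
  rw [pow_sub₀ _ hA hrB, pow_sub₀ _ hB hrA] at hcount
  rw [pow_sub₀ _ hA Fintype.card_pos, pow_sub₀ _ hB Fintype.card_pos]
  field_simp at hcount ⊢
  linear_combination hcount

end BipartiteGraphs

end

/-- Theorem (exact count of connected unicyclic bipartite graphs):
`C(i,j,0) = (1/2) i^{j−1} j^{i−1} Σ_{r=2}^{min(i,j)} ((i)_r (j)_r/(i^r j^r)) (i+j−r)`. -/
theorem statement_10 (i j : ℕ) (hi : 0 < i) (hj : 0 < j) :
    (bipGraphCount i j (i + j) : ℝ) =
      1/2 * (i : ℝ) ^ (j - 1) * (j : ℝ) ^ (i - 1) *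
        ∑ r ∈ Finset.Icc 2 (min i j),
          ((Nat.descFactorial i r : ℝ) * (Nat.descFactorial j r : ℝ) /
              ((i : ℝ) ^ r * (j : ℝ) ^ r)) *
            ((i : ℝ) + (j : ℝ) - (r : ℝ)) := by
  have : NeZero i := ⟨hi.ne'⟩
  have : NeZero j := ⟨hj.ne'⟩
  have htwo : 2 * (bipGraphCount i j (i + j) : ℝ) =
      ∑ r ∈ Finset.Icc 2 (min i j), ((connectedPairs (Fin i) (Fin j) r).card : ℝ) := by
    have hcount := two_mul_ncard_unicyclic_bipartite (A := Fin i) (B := Fin j)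
    simp only [IsBipartiteSum, and_assoc, Fintype.card_fin] at hcount
    exact_mod_cast hcount
  have hterm (r : ℕ) (hr : r ∈ Finset.Icc 2 (min i j)) :
      ((connectedPairs (Fin i) (Fin j) r).card : ℝ) = (i : ℝ) ^ (j - 1) * (j : ℝ) ^ (i - 1) *
        (i.descFactorial r * j.descFactorial r / ((i : ℝ) ^ r * (j : ℝ) ^ r) * (i + j - r)) := by
    obtain ⟨hr2, hrmin⟩ := Finset.mem_Icc.1 hr
    have : NeZero r := ⟨by omega⟩
    simpa using cast_card_connectedPairs (A := Fin i) (B := Fin j) (by simpa using hrmin)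
  rw [Finset.sum_congr rfl hterm, ← Finset.mul_sum] at htwo
  linear_combination htwo / 2
end

section
/- There exists a constant c > 0 such that for all positive integers i, j, ℓ with ℓ ≤ ij − i − j and 1/2 ≤ i/j ≤ 2, the number C(i,j,ℓ) of connected bipartite graphs with labelled partition classes of sizes i and j and i + j + ℓ edges satisfies C(i,j,ℓ) ≤ i^{j} · j^{i} · (i+j)^{(3ℓ−1)/2} · (c/ℓ)^{ℓ/2}. -/
open Filter Real

/-!
A connected graph has a normal spanning tree with any prescribed root, that is, one for which every
edge of the graph joins a vertex to one of its ancestors. Hence a connected bipartite graph with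
`i + j + ℓ` edges is a spanning tree `T` of the complete bipartite graph together with `ℓ + 1` of at
most `∑ v, depth T v` pairs, and `C(i, j, ℓ) ≤ ∑ T, (∑ v, depth T v).choose (ℓ + 1)`. By convexity
it remains to bound the moments of the depth. A tree with a marked vertex at depth `d` is a path
from the root with a bipartite forest hanging from it. Counting these shows that the depth of a
random vertex in a random tree equals `d` with probability `O(d / n * exp (-d ^ 2 / (8 * n)))`,
where `n = i + j`, so that its `m`-th moment is at most a constant times `√(8 * n * m) ^ m`.
-/

open Function Finset

section RootedTrees

variable {V : Type*} {r x y : V} {F : V → V}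

/-- `F` is the parent map of a tree with root `r`; the root is encoded as its own parent. -/
structure IsRootedTree (r : V) (F : V → V) : Prop where
  map_root : F r = r
  exists_iterate_eq : ∀ x, ∃ m, F^[m] x = r

/-- The distance from `x` to the root `r` in the tree with parent map `F`, with junk value `0` if
`x` never reaches `r`. -/
noncomputable def depth (r : V) (F : V → V) (x : V) : ℕ := sInf {m | F^[m] x = r}

/-- `y` lies on the path from `x` to the root; every vertex is an ancestor of itself. -/
def IsAncestor (F : V → V) (y x : V) : Prop := ∃ m, F^[m] x = y

@[simp]
lemma depth_root : depth r F r = 0 := Nat.sInf_eq_zero.2 (Or.inl rfl)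

lemma isAncestor_refl : IsAncestor F x x := ⟨0, rfl⟩

lemma isAncestor_map_iff (h : x ≠ y) : IsAncestor F y (F x) ↔ IsAncestor F y x := by
  refine ⟨fun ⟨m, hm⟩ ↦ ⟨m + 1, hm⟩, ?_⟩
  rintro ⟨_ | m, hm⟩
  · exact absurd hm h
  · exact ⟨m, hm⟩

namespace IsRootedTree

lemma iterate_depth (h : IsRootedTree r F) (x : V) : F^[depth r F x] x = r :=
  Nat.sInf_mem (h.exists_iterate_eq x)

lemma isAncestor_root (h : IsRootedTree r F) (x : V) : IsAncestor F r x := h.exists_iterate_eq x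

lemma isAncestor_root_iff (h : IsRootedTree r F) : IsAncestor F y r ↔ y = r := by
  simp [IsAncestor, iterate_fixed h.map_root, eq_comm]

lemma depth_of_ne (h : IsRootedTree r F) (hx : x ≠ r) : depth r F x = depth r F (F x) + 1 := by
  apply le_antisymm
  · exact Nat.sInf_le (h.iterate_depth (F x))
  · have hit := h.iterate_depth x
    rcases hd : depth r F x with _ | m
    · rw [hd] at hit
      exact absurd hit hx
    · rw [hd] at hit
      exact Nat.succ_le_succ (Nat.sInf_le hit)

lemma depth_iterate (h : IsRootedTree r F) (m : ℕ) (x : V) :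
    depth r F (F^[m] x) = depth r F x - m := by
  induction m generalizing x with
  | zero => simp
  | succ m ih =>
    rw [iterate_succ_apply, ih]
    by_cases hx : x = r
    · simp [hx, h.map_root]
    · rw [h.depth_of_ne hx, Nat.add_sub_add_right]

lemma iterate_min_depth (h : IsRootedTree r F) (m : ℕ) (x : V) :
    F^[min m (depth r F x)] x = F^[m] x := by
  rcases le_total m (depth r F x) with hm | hm
  · rw [min_eq_left hm]
  · obtain ⟨k, rfl⟩ := Nat.exists_eq_add_of_le' hm
    rw [min_eq_right hm, iterate_add_apply, h.iterate_depth, iterate_fixed h.map_root]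

end IsRootedTree

lemma isRootedTree_and_depth_eq {D : V → ℕ} (hr : F r = r) (hD₀ : D r = 0)
    (hD : ∀ x, x ≠ r → D x = D (F x) + 1) : IsRootedTree r F ∧ depth r F = D := by
  have iterate_D (n : ℕ) : ∀ x, D x = n → F^[n] x = r := by
    induction n with
    | zero =>
      intro x hx
      by_contra hxr
      exact absurd (hD x hxr) (by simp [hx])
    | succ n ih =>
      intro x hx
      have hxr : x ≠ r := by rintro rfl; omega
      exact ih (F x) (by have := hD x hxr; omega)
  have hF : IsRootedTree r F := ⟨hr, fun x ↦ ⟨D x, iterate_D _ x rfl⟩⟩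
  have depth_eq (n : ℕ) : ∀ x, depth r F x = n → n = D x := by
    induction n with
    | zero =>
      intro x hx
      have hxr : x = r := by simpa [hx] using hF.iterate_depth x
      rw [hxr, hD₀]
    | succ n ih =>
      intro x hx
      have hxr : x ≠ r := by rintro rfl; simp at hx
      rw [hD x hxr, ← ih (F x) (by have := hF.depth_of_ne hxr; omega)]
  exact ⟨hF, funext fun x ↦ depth_eq _ x rfl⟩

open Classical in
lemma IsRootedTree.update (h : IsRootedTree r F) (hyx : ¬ IsAncestor F y x)
    (hle : depth r F y ≤ depth r F x) :
    IsRootedTree r (update F y x) ∧ depth r (update F y x) = fun z ↦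
      depth r F z + if IsAncestor F y z then depth r F x + 1 - depth r F y else 0 := by
  have hyr : y ≠ r := fun hy ↦ hyx (hy ▸ h.isAncestor_root x)
  refine isRootedTree_and_depth_eq ?_ ?_ fun z hz ↦ ?_
  · rw [update_of_ne hyr.symm, h.map_root]
  · simp [h.isAncestor_root_iff, hyr]
  · obtain rfl | hzy := eq_or_ne z y
    · rw [update_self, if_pos isAncestor_refl, if_neg hyx]
      omega
    · rw [update_of_ne hzy, h.depth_of_ne hz]
      simp only [isAncestor_map_iff hzy]
      omega

end RootedTrees

section NormalTrees

variable {V : Type*} {G : SimpleGraph V} {r : V} {F : V → V}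

/-- `F` is the parent map of a normal spanning tree of `G` (a depth-first search tree): every edge
of `G` joins a vertex to one of its ancestors. -/
structure IsNormalTree (G : SimpleGraph V) (r : V) (F : V → V) : Prop
    extends IsRootedTree r F where
  adj_map : ∀ x, x ≠ r → G.Adj x (F x)
  isAncestor_or : ∀ x y, G.Adj x y → IsAncestor F y x ∨ IsAncestor F x y

lemma exists_isRootedTree_adj (hG : G.Connected) (r : V) :
    ∃ F, IsRootedTree r F ∧ ∀ x, x ≠ r → G.Adj x (F x) := by
  classical
  have exists_closer (x : V) (hx : x ≠ r) : ∃ y, G.Adj x y ∧ G.dist x r = G.dist y r + 1 := by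
    obtain ⟨p, hp⟩ := hG.exists_walk_length_eq_dist x r
    cases p with
    | nil => exact absurd rfl hx
    | @cons _ y _ hxy q =>
      refine ⟨y, hxy, ?_⟩
      have hq := SimpleGraph.dist_le q
      have htri := hG.dist_triangle (u := x) (v := y) (w := r)
      rw [SimpleGraph.dist_eq_one_iff_adj.2 hxy] at htri
      rw [SimpleGraph.Walk.length_cons] at hp
      omega
  choose! F hadj hdist using exists_closer
  have hne (x : V) (hx : x ≠ r) : update F r r x = F x := update_of_ne hx _ _
  refine ⟨update F r r, (isRootedTree_and_depth_eq (D := (G.dist · r)) (update_self ..)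
    SimpleGraph.dist_self fun x hx ↦ ?_).1, fun x hx ↦ ?_⟩
  · rw [hne x hx, hdist x hx]
  · rw [hne x hx]
    exact hadj x hx

/-- Among all spanning trees, one of maximal total depth is normal: an edge between two incomparable
vertices could be used to rehang the shallower one below the deeper one. -/
lemma exists_isNormalTree [Finite V] (hG : G.Connected) (r : V) : ∃ F, IsNormalTree G r F := by
  classical
  cases nonempty_fintype V
  obtain ⟨F, ⟨hF, hadj⟩, hmax⟩ := Set.exists_max_image
    {F | IsRootedTree r F ∧ ∀ x, x ≠ r → G.Adj x (F x)} (fun F ↦ ∑ x, depth r F x)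
    (Set.toFinite _) (exists_isRootedTree_adj hG r)
  have comparable (x y : V) (hxy : G.Adj x y) (hle : depth r F y ≤ depth r F x) :
      IsAncestor F y x := by
    by_contra hyx
    obtain ⟨hF', hdepth⟩ := hF.update hyx hle
    have hadj' (z : V) (hz : z ≠ r) : G.Adj z (update F y x z) := by
      obtain rfl | hzy := eq_or_ne z y
      · rw [update_self]
        exact hxy.symm
      · rw [update_of_ne hzy]
        exact hadj z hz
    refine (hmax _ ⟨hF', hadj'⟩).not_gt ?_
    simp only [hdepth]
    refine sum_lt_sum (fun z _ ↦ Nat.le_add_right _ _) ⟨y, mem_univ y, ?_⟩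
    rw [if_pos isAncestor_refl]
    omega
  exact ⟨F, hF, hadj, fun x y hxy ↦ (le_total (depth r F y) (depth r F x)).imp
    (comparable x y hxy) (comparable y x hxy.symm)⟩

variable [Fintype V]

open Classical in
/-- The edges of the tree with parent map `F`. -/
noncomputable def treeEdges (r : V) (F : V → V) : Finset (Sym2 V) :=
  (univ.erase r).image fun x ↦ s(x, F x)

open Classical in
/-- The pairs consisting of a vertex and one of its proper ancestors; an edge of a graph in which
`F` is normal is one of them. -/
noncomputable def ancestorPairs (r : V) (F : V → V) : Finset (Sym2 V) :=
  (univ.sigma fun x ↦ range (depth r F x)).image fun p ↦ s(p.1, F^[p.2 + 1] p.1)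

lemma card_ancestorPairs_le : #(ancestorPairs r F) ≤ ∑ x, depth r F x := by
  classical
  exact card_image_le.trans (by simp)

lemma IsRootedTree.card_treeEdges (h : IsRootedTree r F) :
    #(treeEdges r F) + 1 = Fintype.card V := by
  classical
  rw [treeEdges, card_image_of_injOn, card_erase_add_one (mem_univ r), card_univ]
  intro x hx y hy hxy
  have hdx := h.depth_of_ne (ne_of_mem_erase hx)
  have hdy := h.depth_of_ne (ne_of_mem_erase hy)
  obtain ⟨hxy, -⟩ | ⟨hxy, hyx⟩ := Sym2.eq_iff.1 hxy
  · exact hxy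
  · rw [hyx] at hdx
    rw [← hxy] at hdy
    omega

lemma IsRootedTree.mem_ancestorPairs {x y : V} (h : IsRootedTree r F) (hxy : x ≠ y)
    (hy : IsAncestor F y x) : s(x, y) ∈ ancestorPairs r F := by
  classical
  obtain ⟨m, hm⟩ := hy
  rw [← h.iterate_min_depth] at hm
  obtain ⟨t, ht⟩ : ∃ t, min m (depth r F x) = t + 1 :=
    Nat.exists_eq_succ_of_ne_zero fun h₀ ↦ hxy (by simpa [h₀] using hm)
  rw [ht] at hm
  exact mem_image.2 ⟨⟨x, t⟩, by simp; omega, by rw [hm]⟩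

open Classical in
lemma IsNormalTree.treeEdges_subset (h : IsNormalTree G r F) : treeEdges r F ⊆ G.edgeFinset := by
  intro e he
  obtain ⟨x, hx, rfl⟩ := mem_image.1 he
  simpa using h.adj_map x (ne_of_mem_erase hx)

open Classical in
lemma IsNormalTree.edgeFinset_subset (h : IsNormalTree G r F) :
    G.edgeFinset ⊆ ancestorPairs r F := by
  intro e
  induction e with
  | _ x y =>
    intro hxy
    rw [SimpleGraph.mem_edgeFinset, SimpleGraph.mem_edgeSet] at hxy
    obtain hyx | hyx := h.isAncestor_or x y hxy
    · exact h.mem_ancestorPairs hxy.ne hyx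
    · rw [Sym2.eq_swap]
      exact h.mem_ancestorPairs hxy.ne' hyx

lemma ncard_isNormalTree_le (r : V) (F : V → V) (k : ℕ) :
    {G : SimpleGraph V | IsNormalTree G r F ∧ G.edgeSet.ncard + 1 = Fintype.card V + k}.ncard ≤
      (∑ x, depth r F x).choose k := by
  classical
  calc
    _ ≤ (((ancestorPairs r F).powersetCard k : Finset _) : Set (Finset (Sym2 V))).ncard := by
      refine Set.ncard_le_ncard_of_injOn (fun G ↦ G.edgeFinset \ treeEdges r F) ?_ ?_
      · rintro G ⟨hF, hcard⟩
        refine mem_powersetCard.2 ⟨sdiff_subset.trans hF.edgeFinset_subset, ?_⟩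
        rw [← SimpleGraph.coe_edgeFinset, Set.ncard_coe_finset] at hcard
        have htree := hF.card_treeEdges
        rw [card_sdiff_of_subset hF.treeEdges_subset]
        omega
      · rintro G ⟨hF, -⟩ G' ⟨hF', -⟩ h
        rw [← SimpleGraph.edgeFinset_inj, ← sdiff_union_of_subset hF.treeEdges_subset,
          ← sdiff_union_of_subset hF'.treeEdges_subset]
        exact congrArg (· ∪ treeEdges r F) h
    _ ≤ _ := by
      rw [Set.ncard_coe_finset, card_powersetCard]
      exact Nat.choose_le_choose k card_ancestorPairs_le

end NormalTrees

section AcyclicMaps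

variable {Y L : Type*}

/-- The parent map `p` of a forest on `Y`, where `p y = none` means that `y` is a root. -/
def IsAcyclicMap (p : Y → Option Y) : Prop := ∃ ρ : Y → ℕ, ∀ ⦃y z⦄, p y = some z → ρ z < ρ y

/-- The parent, after the vertex `none` of a forest on `Option Y` has been contracted into its own
parent `z₀`, of a vertex whose parent used to be the third argument. -/
def contractNone (z₀ : Option (Option Y)) : Option (Option Y) → Option Y
  | none => none
  | some none => z₀.join
  | some (some y) => some y

lemma IsAcyclicMap.ne_some_self {p : Y → Option Y} (h : IsAcyclicMap p) (y : Y) :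
    p y ≠ some y := fun hy ↦
  let ⟨_, hρ⟩ := h
  lt_irrefl _ (hρ hy)

lemma IsAcyclicMap.map_equiv {Z : Type*} {p : Y → Option Y} (h : IsAcyclicMap p) (e : Z ≃ Y) :
    IsAcyclicMap fun z ↦ (p (e z)).map e.symm := by
  obtain ⟨ρ, hρ⟩ := h
  refine ⟨ρ ∘ e, fun z z' hz ↦ ?_⟩
  obtain ⟨y, hy, rfl⟩ := Option.map_eq_some_iff.1 hz
  simpa using hρ hy

lemma IsAcyclicMap.contract {p : Option Y → Option (Option Y)} (h : IsAcyclicMap p) :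
    IsAcyclicMap fun y ↦ contractNone (p none) (p (some y)) := by
  obtain ⟨ρ, hρ⟩ := h
  refine ⟨ρ ∘ some, fun y z hz ↦ ?_⟩
  rcases hy : p (some y) with _ | _ | y' <;> simp only [hy, contractNone] at hz
  · exact (Option.some_ne_none z hz.symm).elim
  · exact (hρ (Option.join_eq_some_iff.1 hz)).trans (hρ hy)
  · exact hρ (hy.trans (congrArg some hz))

variable [Fintype L]

open Classical in
lemma card_contractNone_eq_none_le (c : L → Option (Option Y)) :
    #{q : L × L | c q.1 ≠ some none ∧ contractNone (c q.1) (c q.2) = none} ≤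
      #{l | c l = none} * Fintype.card L := by
  have second_cases {q : L × L} (hq : q ∈ ({q : L × L | c q.1 ≠ some none ∧
      contractNone (c q.1) (c q.2) = none} : Finset (L × L))) :
      c q.1 ≠ some none ∧ (c q.2 ≠ none → c q.2 = some none ∧ c q.1 = none) := by
    obtain ⟨-, h₁, h⟩ := mem_filter.1 hq
    refine ⟨h₁, fun h₂ ↦ ?_⟩
    rcases hq₁ : c q.1 with _ | _ | _ <;> rcases hq₂ : c q.2 with _ | _ | _ <;>
      simp_all [contractNone]
  rw [mul_comm, ← card_univ, ← card_product]
  -- Swap the two entries of a pair of the second kind; its first entry then has parent `none`.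
  refine card_le_card_of_injOn (fun q ↦ if c q.2 = none then q else q.swap) ?_ ?_
  · intro q hq
    by_cases h : c q.2 = none
    · simp [h]
    · simp [(second_cases hq).2 h]
  · intro q hq q' hq' heq
    dsimp only at heq
    split_ifs at heq with h h' h'
    · exact heq
    · exact absurd (heq ▸ ((second_cases hq').2 h').1) (second_cases hq).1
    · exact absurd (heq ▸ ((second_cases hq).2 h).1) (second_cases hq').1
    · exact Prod.swap_injective heq

open Classical in
lemma card_isAcyclicMap_option_le [Fintype Y] (c : L → Option (Option Y)) :
    #{g : Option Y → L | IsAcyclicMap (c ∘ g)} ≤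
      ∑ l with c l ≠ some none, #{g : Y → L | IsAcyclicMap (contractNone (c l) ∘ c ∘ g)} := by
  rw [← card_sigma]
  refine card_le_card_of_injOn (fun g ↦ ⟨g none, g ∘ some⟩) (fun g hg ↦ ?_) fun g _ g' _ h ↦ ?_
  · have hg := (mem_filter.1 hg).2
    simpa using ⟨hg.ne_some_self none, hg.contract⟩
  · obtain ⟨h₀, h₁⟩ := Sigma.mk.inj_iff.1 h
    exact funext (Option.forall.2 ⟨h₀, congrFun (eq_of_heq h₁)⟩)

open Classical in
/-- Contract the vertices of `Y` one by one. -/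
lemma card_isAcyclicMap_mul_le (Y : Type*) [Fintype Y] : ∀ c : L → Option Y,
    #{g : Y → L | IsAcyclicMap (c ∘ g)} * Fintype.card L ≤
      #{l | c l = none} * Fintype.card L ^ Fintype.card Y := by
  refine Fintype.induction_empty_option (P := fun Y _ ↦ ∀ c : L → Option Y,
    #{g : Y → L | IsAcyclicMap (c ∘ g)} * Fintype.card L ≤
      #{l | c l = none} * Fintype.card L ^ Fintype.card Y) ?_ ?_ ?_ Y
  · intro Z Y _ e ih c
    let := Fintype.ofEquiv Y e.symm
    have hcard : #{g : Y → L | IsAcyclicMap (c ∘ g)} ≤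
        #{g : Z → L | IsAcyclicMap ((Option.map e.symm ∘ c) ∘ g)} := by
      refine card_le_card_of_injOn (· ∘ e) (fun g hg ↦ ?_) e.surjective.injective_comp_right.injOn
      simpa [comp_def] using (mem_filter.1 hg).2.map_equiv e
    refine (Nat.mul_le_mul_right _ hcard).trans ((ih _).trans_eq ?_)
    simp [Fintype.card_congr e]
  · intro c
    have hc (l : L) : c l = none := by
      rcases c l with _ | ⟨⟨⟩⟩
      rfl
    simpa [hc] using Nat.mul_le_mul_right (Fintype.card L) (card_filter_le {default} _)
  · intro Y _ ih c
    calc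
      _ ≤ (∑ l with c l ≠ some none, #{g : Y → L | IsAcyclicMap (contractNone (c l) ∘ c ∘ g)}) *
            Fintype.card L := by
        gcongr
        convert! card_isAcyclicMap_option_le c
      _ ≤ ∑ l with c l ≠ some none,
            #{l' | contractNone (c l) (c l') = none} * Fintype.card L ^ Fintype.card Y := by
        rw [sum_mul]
        exact sum_le_sum fun l _ ↦ ih (contractNone (c l) ∘ c)
      _ = #{q : L × L | c q.1 ≠ some none ∧ contractNone (c q.1) (c q.2) = none} *
            Fintype.card L ^ Fintype.card Y := by
        rw [← sum_mul, card_filter, Fintype.sum_prod_type, sum_filter]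
        simp only [card_filter, ite_and]
        refine congrArg (· * _) (sum_congr rfl fun l _ ↦ ?_)
        split_ifs <;> simp
      _ ≤ _ := by
        refine (Nat.mul_le_mul_right _ (card_contractNone_eq_none_le c)).trans_eq ?_
        rw [Fintype.card_option]
        ring

end AcyclicMaps

section BipartiteForests

variable {L R : Type*} {A : Finset L} {B : Finset R}

/-- The parent maps `f` and `g` of a bipartite forest on `L ⊕ R` with set of roots `A ⊕ B`. -/
def IsBipForest (A : Finset L) (B : Finset R) (f : {x // x ∉ A} → R) (g : {y // y ∉ B} → L) :
    Prop :=
  ∃ ρ : L ⊕ R → ℕ, (∀ x, ρ (Sum.inr (f x)) < ρ (Sum.inl x)) ∧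
    ∀ y, ρ (Sum.inl (g y)) < ρ (Sum.inr y)

open Classical in
/-- The parent in `R` of a vertex in `L`, with `none` if the vertex or its parent is a root. -/
noncomputable def innerParent (A : Finset L) (B : Finset R) (f : {x // x ∉ A} → R) (x : L) :
    Option {y // y ∉ B} :=
  if h : ∃ hx : x ∉ A, f ⟨x, hx⟩ ∉ B then some ⟨f ⟨x, h.1⟩, h.2⟩ else none

lemma innerParent_eq_some_iff {f : {x // x ∉ A} → R} {x : L} {y : {y // y ∉ B}} :
    innerParent A B f x = some y ↔ ∃ hx, f ⟨x, hx⟩ = y := by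
  rcases y with ⟨y, hy⟩
  by_cases h : ∃ hx : x ∉ A, f ⟨x, hx⟩ ∉ B
  · simp only [innerParent, dif_pos h, Option.some_inj, Subtype.mk.injEq]
    exact ⟨fun hfx ↦ ⟨h.1, hfx⟩, fun ⟨_, hfx⟩ ↦ hfx⟩
  · simp only [innerParent, dif_neg h, reduceCtorEq, false_iff]
    rintro ⟨hx, rfl⟩
    exact h ⟨hx, hy⟩

lemma innerParent_eq_none_iff {f : {x // x ∉ A} → R} {x : L} :
    innerParent A B f x = none ↔ ∀ hx, f ⟨x, hx⟩ ∈ B := by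
  simp [innerParent]

lemma IsBipForest.isAcyclicMap {f : {x // x ∉ A} → R} {g : {y // y ∉ B} → L}
    (h : IsBipForest A B f g) : IsAcyclicMap (innerParent A B f ∘ g) := by
  obtain ⟨ρ, hf, hg⟩ := h
  refine ⟨fun y ↦ ρ (Sum.inr y), fun y z hz ↦ ?_⟩
  obtain ⟨hx, hfx⟩ := innerParent_eq_some_iff.1 hz
  simpa only [hfx] using (hf ⟨g y, hx⟩).trans (hg y)

lemma card_filter_apply_mem_mul_le {X : Type*} [Fintype X] [DecidableEq X] [Fintype R]
    [DecidableEq R] (x : X) (B : Finset R) :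
    #{f : X → R | f x ∈ B} * Fintype.card R ≤ #B * Fintype.card R ^ Fintype.card X := by
  rw [← Fintype.card_fun, ← card_univ, ← card_univ, ← card_product, ← card_product]
  refine card_le_card_of_injOn (fun p ↦ (p.1 x, update p.1 x p.2)) (fun p hp ↦ ?_) ?_
  · simpa using hp
  · intro p _ p' _ h
    obtain ⟨h₁, h₂⟩ := Prod.mk.inj h
    have hval := congrFun h₂ x
    refine Prod.ext (funext fun z ↦ ?_) (by simpa using hval)
    obtain rfl | hz := eq_or_ne z x
    · exact h₁
    · simpa [hz] using congrFun h₂ z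

variable [Fintype L] [Fintype R]

open Classical in
lemma sum_card_innerParent_eq_none_mul_le (A : Finset L) (B : Finset R) :
    (∑ f, #{x | innerParent A B f x = none}) * Fintype.card R ≤
      Fintype.card R ^ (Fintype.card L - #A) *
        (Fintype.card L * #B + Fintype.card R * #A) := by
  have hcard : Fintype.card {x // x ∉ A} = Fintype.card L - #A := by simp
  have card_le (x : L) : #{f | innerParent A B f x = none} * Fintype.card R ≤
      Fintype.card R ^ (Fintype.card L - #A) * (#B + if x ∈ A then Fintype.card R else 0) := by
    by_cases hx : x ∈ A
    · simp only [innerParent_eq_none_iff, hx, not_true_eq_false, IsEmpty.forall_iff]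
      simp [mul_add]
    · have := card_filter_apply_mem_mul_le (⟨x, hx⟩ : {x // x ∉ A}) B
      simpa [innerParent_eq_none_iff, hx, mul_comm, hcard] using this
  calc
    _ = ∑ x, #{f | innerParent A B f x = none} * Fintype.card R := by
      simp only [card_filter]
      rw [sum_comm, sum_mul]
    _ ≤ _ := sum_le_sum fun x _ ↦ card_le x
    _ = _ := by
      rw [← mul_sum, sum_add_distrib]
      simp [mul_comm]

open Classical in
lemma card_isBipForest_mul_le (A : Finset L) (B : Finset R) :
    #{p : ({x // x ∉ A} → R) × ({y // y ∉ B} → L) | IsBipForest A B p.1 p.2} *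
        (Fintype.card L * Fintype.card R) ≤
      Fintype.card L ^ (Fintype.card R - #B) * Fintype.card R ^ (Fintype.card L - #A) *
        (Fintype.card L * #B + Fintype.card R * #A) := by
  have hcard : Fintype.card {y // y ∉ B} = Fintype.card R - #B := by simp
  have card_le : #{p : ({x // x ∉ A} → R) × ({y // y ∉ B} → L) | IsBipForest A B p.1 p.2} ≤
      ∑ f, #{g | IsAcyclicMap (innerParent A B f ∘ g)} := by
    rw [card_filter, Fintype.sum_prod_type]
    simp only [← card_filter]
    exact sum_le_sum fun f _ ↦
      card_le_card (monotone_filter_right _ fun g _ (hg : IsBipForest A B f g) ↦ hg.isAcyclicMap)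
  calc
    _ ≤ (∑ f, #{g | IsAcyclicMap (innerParent A B f ∘ g)} * Fintype.card L) * Fintype.card R := by
      rw [← mul_assoc, ← sum_mul]
      gcongr
    _ ≤ (∑ f, #{x | innerParent A B f x = none} * Fintype.card L ^ (Fintype.card R - #B)) *
          Fintype.card R := by
      refine Nat.mul_le_mul_right _ (sum_le_sum fun f _ ↦ ?_)
      rw [← hcard]
      convert! card_isAcyclicMap_mul_le _ (innerParent A B f)
    _ ≤ _ := by
      rw [← sum_mul, mul_right_comm, mul_comm, mul_assoc]
      exact Nat.mul_le_mul_left _ (sum_card_innerParent_eq_none_mul_le A B)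

end BipartiteForests

section AncestorAt

variable {V : Type*} {r v : V} {F : V → V}

/-- The ancestor of `v` at depth `s`, with junk value `v` if `s` exceeds the depth of `v`. -/
noncomputable def ancestorAt (r : V) (F : V → V) (v : V) (s : ℕ) : V := F^[depth r F v - s] v

lemma ancestorAt_depth : ancestorAt r F v (depth r F v) = v := by
  simp [ancestorAt]

lemma map_ancestorAt_succ {s : ℕ} (hs : s < depth r F v) :
    F (ancestorAt r F v (s + 1)) = ancestorAt r F v s := by
  rw [ancestorAt, ancestorAt, ← iterate_succ_apply' F]
  congr 2
  omega

namespace IsRootedTree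

lemma ancestorAt_zero (h : IsRootedTree r F) : ancestorAt r F v 0 = r := h.iterate_depth v

lemma depth_ancestorAt (h : IsRootedTree r F) {s : ℕ} (hs : s ≤ depth r F v) :
    depth r F (ancestorAt r F v s) = s := by
  rw [ancestorAt, h.depth_iterate, Nat.sub_sub_self hs]

end IsRootedTree

end AncestorAt

section BipartiteTrees

variable {L R : Type*} {r₀ : L} {F F' : L ⊕ R → L ⊕ R} {v v' : L ⊕ R} {a b : ℕ}

/-- `F` is the parent map of a tree with root `r₀ : L` all of whose edges join `L` to `R`. -/
structure IsBipTree (r₀ : L) (F : L ⊕ R → L ⊕ R) : Prop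
    extends IsRootedTree (Sum.inl r₀) F where
  isLeft_map : ∀ v ≠ Sum.inl r₀, (F v).isLeft = v.isRight

namespace IsBipTree

lemma exists_map_inl (h : IsBipTree r₀ F) {x : L} (hx : x ≠ r₀) : ∃ y, F (Sum.inl x) = Sum.inr y :=
  Sum.isRight_iff.1 (by simpa using h.isLeft_map (Sum.inl x) (by simpa))

lemma exists_map_inr (h : IsBipTree r₀ F) (y : R) : ∃ x, F (Sum.inr y) = Sum.inl x :=
  Sum.isLeft_iff.1 (h.isLeft_map (Sum.inr y) Sum.inr_ne_inl)

lemma isLeft_iff_even_depth (h : IsBipTree r₀ F) :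
    v.isLeft ↔ Even (depth (Sum.inl r₀) F v) := by
  induction hd : depth (Sum.inl r₀) F v generalizing v with
  | zero =>
    have hv := h.iterate_depth v
    rw [hd, iterate_zero_apply] at hv
    simp [hv]
  | succ d ih =>
    have hv : v ≠ Sum.inl r₀ := by
      rintro rfl
      simp at hd
    have hFv := ih (v := F v) (by have := h.depth_of_ne hv; omega)
    rw [Nat.even_add_one, ← hFv, h.isLeft_map v hv]
    cases v <;> simp

lemma exists_isBipForest (h : IsBipTree r₀ F) {A : Finset L} (hA : r₀ ∈ A) (B : Finset R) :
    ∃ f g, IsBipForest A B f g ∧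
      (∀ x : {x // x ∉ A}, F (Sum.inl ↑x) = Sum.inr (f x)) ∧
        ∀ y : {y // y ∉ B}, F (Sum.inr ↑y) = Sum.inl (g y) := by
  have ne_root (x : {x // x ∉ A}) : (x : L) ≠ r₀ := fun hx ↦ x.2 (hx ▸ hA)
  choose f hf using fun x : {x // x ∉ A} ↦ h.exists_map_inl (ne_root x)
  choose g hg using fun y : {y // y ∉ B} ↦ h.exists_map_inr y
  refine ⟨f, g, ⟨depth (Sum.inl r₀) F, fun x ↦ ?_, fun y ↦ ?_⟩, hf, hg⟩
  · rw [h.depth_of_ne (x := Sum.inl ↑x) (by simpa using ne_root x), hf]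
    exact Nat.lt_succ_self _
  · rw [h.depth_of_ne (x := Sum.inr ↑y) Sum.inr_ne_inl, hg]
    exact Nat.lt_succ_self _

end IsBipTree

/-- A path in a bipartite tree with root `r₀ : L` that starts at the root: the vertices at the even
depths `2, 4, …, 2a`, and those at the odd depths `1, 3, …, 2b - 1`. -/
abbrev PathCode (r₀ : L) (R : Type*) (a b : ℕ) : Type _ := (Fin a ↪ {x // x ≠ r₀}) × (Fin b ↪ R)

/-- In the bipartite tree `F`, the path from the root to `v` is the one described by `e`. -/
structure IsPathCode (e : PathCode r₀ R a b) (F : L ⊕ R → L ⊕ R) (v : L ⊕ R) : Prop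
    extends IsBipTree r₀ F where
  depth_eq : depth (Sum.inl r₀) F v = a + b
  ancestorAt_even : ∀ t : Fin a, ancestorAt (Sum.inl r₀) F v (2 * t + 2) = Sum.inl ↑(e.1 t)
  ancestorAt_odd : ∀ t : Fin b, ancestorAt (Sum.inl r₀) F v (2 * t + 1) = Sum.inr (e.2 t)

lemma IsBipTree.exists_isPathCode (h : IsBipTree r₀ F) (hab : b = a ∨ b = a + 1)
    (hv : depth (Sum.inl r₀) F v = a + b) : ∃ e : PathCode r₀ R a b, IsPathCode e F v := by
  have depth_even (t : Fin a) :
      depth (Sum.inl r₀) F (ancestorAt (Sum.inl r₀) F v (2 * t + 2)) = 2 * t + 2 :=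
    h.depth_ancestorAt (by omega)
  have depth_odd (t : Fin b) :
      depth (Sum.inl r₀) F (ancestorAt (Sum.inl r₀) F v (2 * t + 1)) = 2 * t + 1 :=
    h.depth_ancestorAt (by omega)
  have exists_inl (t : Fin a) : ∃ x : {x // x ≠ r₀},
      ancestorAt (Sum.inl r₀) F v (2 * t + 2) = Sum.inl ↑x := by
    have heven : Even (2 * (t : ℕ) + 2) := ⟨t + 1, by ring⟩
    rw [← depth_even t, ← h.isLeft_iff_even_depth] at heven
    obtain ⟨x, hx⟩ := Sum.isLeft_iff.1 heven
    refine ⟨⟨x, ?_⟩, hx⟩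
    rintro rfl
    simpa [hx] using depth_even t
  have exists_inr (t : Fin b) : ∃ y, ancestorAt (Sum.inl r₀) F v (2 * t + 1) = Sum.inr y := by
    have hodd : ¬ Even (2 * (t : ℕ) + 1) := by simp
    rw [← depth_odd t, ← h.isLeft_iff_even_depth, Sum.not_isLeft] at hodd
    exact Sum.isRight_iff.1 hodd
  choose x hx using exists_inl
  choose y hy using exists_inr
  refine ⟨(⟨x, fun t t' htt ↦ ?_⟩, ⟨y, fun t t' htt ↦ ?_⟩), h, hv, hx, hy⟩
  · have heq := depth_even t
    rw [hx, htt, ← hx, depth_even] at heq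
    omega
  · have heq := depth_odd t
    rw [hy, htt, ← hy, depth_odd] at heq
    omega

namespace PathCode

variable (e : PathCode r₀ R a b)

open Classical in
/-- The vertices in `L` of a coded path, including the root. -/
noncomputable def left : Finset L := insert r₀ (univ.map (e.1.trans (Embedding.subtype _)))

/-- The vertices in `R` of a coded path. -/
def right : Finset R := univ.map e.2

lemma root_mem_left : r₀ ∈ left e := by
  simp [left]

lemma card_left : #(left e) = a + 1 := by
  simp [left, fun t ↦ (e.1 t).2]

lemma card_right : #(right e) = b := by
  simp [right]

end PathCode

namespace IsPathCode

variable {e : PathCode r₀ R a b}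

lemma ancestorAt_eq (h : IsPathCode e F v) (h' : IsPathCode e F' v') (hab : b = a ∨ b = a + 1)
    {s : ℕ} (hs : s ≤ a + b) :
    ancestorAt (Sum.inl r₀) F v s = ancestorAt (Sum.inl r₀) F' v' s := by
  obtain ⟨t, rfl | rfl⟩ := Nat.even_or_odd' s
  · rcases t with _ | t
    · rw [mul_zero, h.ancestorAt_zero, h'.ancestorAt_zero]
    · exact (h.ancestorAt_even ⟨t, by omega⟩).trans (h'.ancestorAt_even ⟨t, by omega⟩).symm
  · exact (h.ancestorAt_odd ⟨t, by omega⟩).trans (h'.ancestorAt_odd ⟨t, by omega⟩).symm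

lemma endpoint_unique (h : IsPathCode e F v) (h' : IsPathCode e F' v')
    (hab : b = a ∨ b = a + 1) : v = v' := by
  rw [← ancestorAt_depth (r := Sum.inl r₀) (F := F) (v := v), h.depth_eq,
    h.ancestorAt_eq h' hab le_rfl, ← h'.depth_eq, ancestorAt_depth]

lemma map_ancestorAt_eq (h : IsPathCode e F v) (h' : IsPathCode e F' v')
    (hab : b = a ∨ b = a + 1) {s : ℕ} (hs : s ≤ a + b) :
    F (ancestorAt (Sum.inl r₀) F v s) = F' (ancestorAt (Sum.inl r₀) F v s) := by
  rcases s with _ | s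
  · rw [h.ancestorAt_zero, h.map_root, h'.map_root]
  · rw [map_ancestorAt_succ (r := Sum.inl r₀) (hs.trans_eq h.depth_eq.symm),
      h.ancestorAt_eq h' hab hs, map_ancestorAt_succ (hs.trans_eq h'.depth_eq.symm),
      h.ancestorAt_eq h' hab (Nat.le_of_succ_le hs)]

lemma map_inl_eq (h : IsPathCode e F v) (h' : IsPathCode e F' v') (hab : b = a ∨ b = a + 1)
    {x : L} (hx : x ∈ e.left) : F (Sum.inl x) = F' (Sum.inl x) := by
  obtain rfl | ⟨t, -, rfl⟩ := by simpa only [PathCode.left, mem_insert, Finset.mem_map] using hx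
  · rw [h.map_root, h'.map_root]
  · have hmap := h.map_ancestorAt_eq h' hab (s := 2 * t + 2) (by omega)
    rwa [h.ancestorAt_even t] at hmap

lemma map_inr_eq (h : IsPathCode e F v) (h' : IsPathCode e F' v') (hab : b = a ∨ b = a + 1)
    {y : R} (hy : y ∈ e.right) : F (Sum.inr y) = F' (Sum.inr y) := by
  obtain ⟨t, -, rfl⟩ := Finset.mem_map.1 hy
  simpa only [h.ancestorAt_odd t] using h.map_ancestorAt_eq h' hab (s := 2 * t + 1) (by omega)

end IsPathCode

variable [Fintype L] [Fintype R]

open Classical in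
lemma card_isPathCode_le (hab : b = a ∨ b = a + 1) (e : PathCode r₀ R a b) :
    #{q : (L ⊕ R → L ⊕ R) × (L ⊕ R) | IsPathCode e q.1 q.2} ≤
      #{p : ({x // x ∉ e.left} → R) × ({y // y ∉ e.right} → L) |
        IsBipForest e.left e.right p.1 p.2} := by
  refine card_le_card_of_forall_subsingleton
    (fun q p ↦ (∀ x : {x // x ∉ e.left}, q.1 (Sum.inl ↑x) = Sum.inr (p.1 x)) ∧
      ∀ y : {y // y ∉ e.right}, q.1 (Sum.inr ↑y) = Sum.inl (p.2 y)) ?_ ?_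
  · rintro ⟨F, v⟩ hq
    have h := (mem_filter.1 hq).2
    obtain ⟨f, g, hfg, hext⟩ := h.exists_isBipForest e.root_mem_left e.right
    exact ⟨(f, g), by simpa using hfg, hext⟩
  · rintro ⟨f, g⟩ - ⟨F, v⟩ ⟨hq, hf, hg⟩ ⟨F', v'⟩ ⟨hq', hf', hg'⟩
    have h := (mem_filter.1 hq).2
    have h' := (mem_filter.1 hq').2
    refine Prod.ext (funext ?_) (h.endpoint_unique h' hab)
    rintro (x | y)
    · by_cases hx : x ∈ e.left
      · exact h.map_inl_eq h' hab hx
      · exact (hf ⟨x, hx⟩).trans (hf' ⟨x, hx⟩).symm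
    · by_cases hy : y ∈ e.right
      · exact h.map_inr_eq h' hab hy
      · exact (hg ⟨y, hy⟩).trans (hg' ⟨y, hy⟩).symm

open Classical in
lemma card_isBipTree_depth_mul_le (r₀ : L) (hab : b = a ∨ b = a + 1) :
    #{q : (L ⊕ R → L ⊕ R) × (L ⊕ R) | IsBipTree r₀ q.1 ∧ depth (Sum.inl r₀) q.1 q.2 = a + b} *
        (Fintype.card L * Fintype.card R) ≤
      (Fintype.card L - 1).descFactorial a * (Fintype.card R).descFactorial b *
        (Fintype.card L ^ (Fintype.card R - b) * Fintype.card R ^ (Fintype.card L - (a + 1)) *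
          (Fintype.card L * b + Fintype.card R * (a + 1))) := by
  have card_le_sum : #{q : (L ⊕ R → L ⊕ R) × (L ⊕ R) | IsBipTree r₀ q.1 ∧
      depth (Sum.inl r₀) q.1 q.2 = a + b} ≤ ∑ e : PathCode r₀ R a b,
        #{q : (L ⊕ R → L ⊕ R) × (L ⊕ R) | IsPathCode e q.1 q.2} := by
    refine (card_le_card fun q hq ↦ ?_).trans card_biUnion_le
    obtain ⟨hF, hv⟩ := (mem_filter.1 hq).2
    obtain ⟨e, he⟩ := hF.exists_isPathCode hab hv
    exact mem_biUnion.2 ⟨e, mem_univ e, by simpa using he⟩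
  have card_pathCode : Fintype.card (PathCode r₀ R a b) =
      (Fintype.card L - 1).descFactorial a * (Fintype.card R).descFactorial b := by
    simp [Fintype.card_embedding_eq, Fintype.card_subtype_compl]
  calc
    _ ≤ ∑ e : PathCode r₀ R a b, _ := (Nat.mul_le_mul_right _ card_le_sum).trans_eq (sum_mul ..)
    _ ≤ ∑ e : PathCode r₀ R a b, Fintype.card L ^ (Fintype.card R - b) *
          Fintype.card R ^ (Fintype.card L - (a + 1)) *
            (Fintype.card L * b + Fintype.card R * (a + 1)) := by
      refine sum_le_sum fun e _ ↦ (Nat.mul_le_mul_right _ (card_isPathCode_le hab e)).trans ?_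
      have := card_isBipForest_mul_le e.left e.right
      rwa [e.card_left, e.card_right] at this
    _ = _ := by
      rw [sum_const, card_univ, card_pathCode, smul_eq_mul]

end BipartiteTrees

section NormalTreesOfBipartiteGraphs

variable {L R : Type*} {r₀ : L} {F : L ⊕ R → L ⊕ R} {G : SimpleGraph (L ⊕ R)}

lemma IsNormalTree.isBipTree (h : IsNormalTree G (Sum.inl r₀) F)
    (hL : ∀ x x', ¬ G.Adj (Sum.inl x) (Sum.inl x'))
    (hR : ∀ y y', ¬ G.Adj (Sum.inr y) (Sum.inr y')) : IsBipTree r₀ F where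
  __ := h.toIsRootedTree
  isLeft_map v hv := by
    have hadj := h.adj_map v hv
    rcases v with x | y <;> rcases hF : F _ with x' | y'
    · exact absurd (hF ▸ hadj) (hL x x')
    · rfl
    · rfl
    · exact absurd (hF ▸ hadj) (hR y y')

open Classical in
lemma bipGraphCount_le {i j : ℕ} (r₀ : Fin i) (l : ℕ) :
    bipGraphCount i j (i + j + l) ≤
      ∑ F with IsBipTree r₀ F, (∑ v : Fin i ⊕ Fin j, depth (Sum.inl r₀) F v).choose (l + 1) := by
  let S : Finset (Fin i ⊕ Fin j → Fin i ⊕ Fin j) := {F | IsBipTree r₀ F}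
  calc
    _ ≤ (⋃ F ∈ S, {G : SimpleGraph (Fin i ⊕ Fin j) | IsNormalTree G (Sum.inl r₀) F ∧
          G.edgeSet.ncard + 1 = Fintype.card (Fin i ⊕ Fin j) + (l + 1)}).ncard := by
      refine Set.ncard_le_ncard fun G ⟨hconn, hL, hR, hcard⟩ ↦ ?_
      obtain ⟨F, hF⟩ := exists_isNormalTree hconn (Sum.inl r₀)
      refine Set.mem_biUnion (mem_filter.2 ⟨mem_univ _, hF.isBipTree hL hR⟩) ⟨hF, ?_⟩
      simp [hcard, add_assoc]
    _ ≤ _ := (set_ncard_biUnion_le _ _).trans (sum_le_sum fun F _ ↦ ncard_isNormalTree_le _ F _)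

end NormalTreesOfBipartiteGraphs

section GaussianEstimates

lemma descFactorial_pred_le {i : ℕ} (hi : 0 < i) (a : ℕ) :
    ((i - 1).descFactorial a : ℝ) ≤ (i : ℝ) ^ a * exp (-((a : ℝ) * (a + 1)) / (2 * i)) := by
  have hi₀ : (i : ℝ) ≠ 0 := by exact_mod_cast hi.ne'
  induction a with
  | zero => simp
  | succ a ih =>
    have factor_le : ((i - 1 - a : ℕ) : ℝ) ≤ i * exp (-((a : ℝ) + 1) / i) := by
      rcases le_or_gt (a + 1) i with h | h
      · calc
          ((i - 1 - a : ℕ) : ℝ) = i * (-((a : ℝ) + 1) / i + 1) := by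
            rw [Nat.sub_sub, add_comm 1 a, Nat.cast_sub h]
            field_simp
            push_cast
            ring
          _ ≤ _ := by
            gcongr
            exact add_one_le_exp _
      · rw [show i - 1 - a = 0 by omega, Nat.cast_zero]
        positivity
    rw [Nat.descFactorial_succ, Nat.cast_mul]
    calc
      _ ≤ i * exp (-((a : ℝ) + 1) / i) * (i ^ a * exp (-((a : ℝ) * (a + 1)) / (2 * i))) := by
        gcongr
      _ = (i : ℝ) ^ (a + 1) * exp (-((a : ℝ) + 1) / i + -((a : ℝ) * (a + 1)) / (2 * i)) := by
        rw [exp_add]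
        ring
      _ = _ := by
        congr 2
        push_cast
        field_simp
        ring

lemma exp_neg_mul_succ_le {a b : ℕ} (hab : b = a ∨ b = a + 1) {p n : ℝ} (hp : 0 < p)
    (hpn : p ≤ n) (hn : 1 ≤ n) :
    exp (-((a : ℝ) * (a + 1)) / (2 * p)) ≤ 3 * exp (-((a + b : ℕ) : ℝ) ^ 2 / (8 * n)) := by
  have hsq : ((a + b : ℕ) : ℝ) ^ 2 ≤ 4 * (a * (a + 1)) + 1 := by
    rcases hab with rfl | rfl <;> push_cast <;> nlinarith
  have hexp : -((a : ℝ) * (a + 1)) / (2 * p) ≤ 1 + -((a + b : ℕ) : ℝ) ^ 2 / (8 * n) := by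
    have hn₀ : 0 < n := by linarith
    calc
      -((a : ℝ) * (a + 1)) / (2 * p) ≤ -((a : ℝ) * (a + 1)) / (2 * n) := by
        rw [neg_div, neg_div, neg_le_neg_iff]
        gcongr
      _ ≤ _ := by
        field_simp
        linarith
  calc
    _ ≤ exp (1 + -((a + b : ℕ) : ℝ) ^ 2 / (8 * n)) := exp_le_exp.2 hexp
    _ ≤ _ := by
      rw [exp_add]
      gcongr
      exact exp_one_lt_three.le

lemma pow_mul_exp_neg_sq_le {c x : ℝ} (hc : 0 < c) (hx : 0 ≤ x) {k : ℕ} (hk : 0 < k) :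
    x ^ k * exp (-x ^ 2 / c) ≤ √(c * k) ^ k * exp (-x ^ 2 / (2 * c)) := by
  have hk' : (0 : ℝ) < k := by exact_mod_cast hk
  have le_mul_exp : x ≤ √(c * k) * exp (x ^ 2 / (2 * c * k)) := by
    refine (pow_le_pow_iff_left₀ hx (by positivity) two_ne_zero).1 ?_
    calc
      x ^ 2 ≤ c * k * (x ^ 2 / (c * k) + 1) := by
        rw [mul_add, mul_div_cancel₀ _ (mul_pos hc hk').ne']
        exact le_add_of_nonneg_right (by positivity)
      _ ≤ c * k * exp (x ^ 2 / (c * k)) := by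
        gcongr
        exact add_one_le_exp _
      _ = _ := by
        rw [mul_pow, sq_sqrt (by positivity), ← exp_nat_mul]
        congr 2
        push_cast
        field_simp
  calc
    _ ≤ (√(c * k) * exp (x ^ 2 / (2 * c * k))) ^ k * exp (-x ^ 2 / c) := by
      gcongr
    _ = √(c * k) ^ k * exp (k * (x ^ 2 / (2 * c * k)) + -x ^ 2 / c) := by
      rw [mul_pow, ← exp_nat_mul, exp_add, mul_assoc]
    _ = _ := by
      congr 2
      field_simp
      ring

/-- Since `exp t ≥ 1 + t`, the sum is dominated by a telescoping one. -/
lemma sum_mul_exp_neg_sq_le {c : ℝ} (hc : 0 < c) (M : ℕ) :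
    ∑ d ∈ range M, (d : ℝ) * exp (-(d : ℝ) ^ 2 / c) ≤ c := by
  have term_le (d : ℕ) : ((d + 1 : ℕ) : ℝ) * exp (-((d + 1 : ℕ) : ℝ) ^ 2 / c) ≤
      c * (exp (-(d : ℝ) ^ 2 / c) - exp (-((d + 1 : ℕ) : ℝ) ^ 2 / c)) := by
    have split : exp (-(d : ℝ) ^ 2 / c) =
        exp ((2 * d + 1) / c) * exp (-((d + 1 : ℕ) : ℝ) ^ 2 / c) := by
      rw [← exp_add]
      congr 1
      push_cast
      field_simp
      ring
    have hlin : ((d + 1 : ℕ) : ℝ) ≤ c * (exp ((2 * d + 1) / c) - 1) := by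
      calc
        ((d + 1 : ℕ) : ℝ) ≤ c * ((2 * d + 1) / c) := by
          push_cast
          field_simp
          linarith [(Nat.cast_nonneg d : (0 : ℝ) ≤ d)]
        _ ≤ _ := by
          gcongr
          linarith [add_one_le_exp ((2 * d + 1) / c)]
    calc
      _ ≤ c * (exp ((2 * d + 1) / c) - 1) * exp (-((d + 1 : ℕ) : ℝ) ^ 2 / c) := by
        gcongr
      _ = _ := by
        rw [split]
        ring
  rcases M with _ | M
  · simpa using hc.le
  calc
    _ = ∑ d ∈ range M, ((d + 1 : ℕ) : ℝ) * exp (-((d + 1 : ℕ) : ℝ) ^ 2 / c) := by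
      simp [sum_range_succ']
    _ ≤ ∑ d ∈ range M, c * (exp (-(d : ℝ) ^ 2 / c) - exp (-((d + 1 : ℕ) : ℝ) ^ 2 / c)) :=
      sum_le_sum fun d _ ↦ term_le d
    _ = c * (1 - exp (-(M : ℝ) ^ 2 / c)) := by
      rw [← mul_sum, sum_range_sub' fun d : ℕ ↦ exp (-(d : ℝ) ^ 2 / c)]
      simp
    _ ≤ c := mul_le_of_le_one_right hc.le (by linarith [exp_pos (-(M : ℝ) ^ 2 / c)])

lemma sqrt_pow_div_factorial_le {n : ℝ} (hn : 0 ≤ n) {m : ℕ} (hm : 0 < m) :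
    √(8 * n * m) ^ m / m.factorial ≤ (9 * √n / √m) ^ m := by
  have hm' : (0 : ℝ) < m := by exact_mod_cast hm
  have hsqrt : √(8 * n * m) ≤ 3 * √n * √m := by
    rw [sqrt_mul (by positivity), sqrt_mul (by norm_num)]
    gcongr
    rw [sqrt_le_left (by norm_num)]
    norm_num
  have hfac : 1 / (m.factorial : ℝ) ≤ (3 / m) ^ m := by
    rw [div_pow, le_div_iff₀ (by positivity), one_div_mul_eq_div]
    refine (pow_div_factorial_le_exp m hm'.le m).trans ?_
    rw [← exp_one_pow]
    gcongr
    exact exp_one_lt_three.le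
  calc
    _ ≤ (3 * √n * √m) ^ m * (3 / m) ^ m := by
      rw [div_eq_mul_one_div]
      gcongr
    _ = _ := by
      rw [← mul_pow]
      congr 1
      field_simp
      rw [sq_sqrt hm'.le]
      ring

end GaussianEstimates

section DepthMoments

lemma pow_mul_pow_mul_le {p q a b : ℕ} (hab : b = a ∨ b = a + 1) (ha : a < p) (hb : b ≤ q)
    {n K : ℝ} (hp : n ≤ K * p) (hq : n ≤ K * q) :
    (p : ℝ) ^ a * q ^ b * (p ^ (q - b) * q ^ (p - (a + 1))) * n ≤ K * (p ^ q * q ^ p) := by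
  rcases hab with rfl | rfl
  · calc
      _ ≤ (p : ℝ) ^ b * q ^ b * (p ^ (q - b) * q ^ (p - (b + 1))) * (K * q) := by gcongr
      _ = K * (p ^ (b + (q - b)) * q ^ (b + 1 + (p - (b + 1)))) := by ring
      _ = _ := by rw [Nat.add_sub_cancel' hb, Nat.add_sub_cancel' ha]
  · calc
      _ ≤ (p : ℝ) ^ a * q ^ (a + 1) * (p ^ (q - (a + 1)) * q ^ (p - (a + 1))) * (K * p) := by
        gcongr
      _ = K * (p ^ (a + 1 + (q - (a + 1))) * q ^ (a + 1 + (p - (a + 1)))) := by ring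
      _ = _ := by rw [Nat.add_sub_cancel' hb, Nat.add_sub_cancel' ha]

lemma descFactorial_mul_pow_mul_le {p q a b : ℕ} (hab : b = a ∨ b = a + 1) (hp₀ : 0 < p)
    {n K : ℝ} (hn : 0 ≤ n) (hp : n ≤ K * p) (hq : n ≤ K * q) :
    ((p - 1).descFactorial a : ℝ) * q.descFactorial b * (p ^ (q - b) * q ^ (p - (a + 1))) * n ≤
      K * (p ^ q * q ^ p) * exp (-((a : ℝ) * (a + 1)) / (2 * p)) := by
  have hK : 0 ≤ K := nonneg_of_mul_nonneg_left (hn.trans hp) (Nat.cast_pos.2 hp₀)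
  rcases le_or_gt p a with ha | ha
  · rw [Nat.descFactorial_of_lt (by omega)]
    simpa using by positivity
  rcases lt_or_ge q b with hb | hb
  · rw [Nat.descFactorial_of_lt hb]
    simpa using by positivity
  have hdesc : (q.descFactorial b : ℝ) ≤ q ^ b := by exact_mod_cast Nat.descFactorial_le_pow q b
  calc
    _ ≤ (p ^ a * exp (-((a : ℝ) * (a + 1)) / (2 * p))) * q ^ b *
          (p ^ (q - b) * q ^ (p - (a + 1))) * n := by
      gcongr
      exact descFactorial_pred_le hp₀ a
    _ = p ^ a * q ^ b * (p ^ (q - b) * q ^ (p - (a + 1))) * n *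
          exp (-((a : ℝ) * (a + 1)) / (2 * p)) := by ring
    _ ≤ _ := mul_le_mul_of_nonneg_right (pow_mul_pow_mul_le hab ha hb hp hq) (exp_pos _).le

lemma descFactorial_mul_pow_mul_add_mul_sq_le {p q a b : ℕ} (hab : b = a ∨ b = a + 1)
    (hd : 0 < a + b) (hp₀ : 0 < p) {n K : ℝ} (hn : 0 ≤ n) (hp : n ≤ K * p) (hq : n ≤ K * q) :
    ((p - 1).descFactorial a : ℝ) * q.descFactorial b *
        (p ^ (q - b) * q ^ (p - (a + 1)) * (p * b + q * (a + 1))) * n ^ 2 ≤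
      2 * K ^ 2 * (p ^ q * q ^ p) * (a + b : ℕ) * exp (-((a : ℝ) * (a + 1)) / (2 * p)) *
        (p * q) := by
  have hK : 0 ≤ K := nonneg_of_mul_nonneg_left (hn.trans hp) (Nat.cast_pos.2 hp₀)
  have hd₁ : (1 : ℝ) ≤ (a + b : ℕ) := by exact_mod_cast hd
  have hlinear : ((p : ℝ) * b + q * (a + 1)) * n ≤ 2 * K * (a + b : ℕ) * (p * q) := by
    calc
      _ = (p * b) * n + (q * (a + 1)) * n := by ring
      _ ≤ (p * b) * (K * q) + (q * (a + 1)) * (K * p) := by gcongr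
      _ = K * ((a + b : ℕ) + 1) * (p * q) := by
        push_cast
        ring
      _ ≤ _ := by
        gcongr ?_ * _
        nlinarith
  calc
    _ = ((p - 1).descFactorial a : ℝ) * q.descFactorial b *
          (p ^ (q - b) * q ^ (p - (a + 1))) * n * ((p * b + q * (a + 1)) * n) := by ring
    _ ≤ K * (p ^ q * q ^ p) * exp (-((a : ℝ) * (a + 1)) / (2 * p)) *
          (2 * K * (a + b : ℕ) * (p * q)) :=
      mul_le_mul (descFactorial_mul_pow_mul_le hab hp₀ hn hp hq) hlinear (by positivity)
        (by positivity)
    _ = _ := by ring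

variable {L R : Type*} [Fintype L] [Fintype R] {n K : ℝ}

open Classical in
lemma card_isBipTree_depth_le (r₀ : L) (hLn : Fintype.card L ≤ n) (hL : n ≤ K * Fintype.card L)
    (hR : n ≤ K * Fintype.card R) {d : ℕ} (hd : 0 < d) :
    (#{q : (L ⊕ R → L ⊕ R) × (L ⊕ R) |
        IsBipTree r₀ q.1 ∧ depth (Sum.inl r₀) q.1 q.2 = d} : ℝ) ≤
      6 * K ^ 2 * ((Fintype.card L : ℝ) ^ Fintype.card R * Fintype.card R ^ Fintype.card L) /
        n ^ 2 * (d * exp (-(d : ℝ) ^ 2 / (8 * n))) := by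
  obtain ⟨a, b, hab, rfl⟩ : ∃ a b, (b = a ∨ b = a + 1) ∧ d = a + b := ⟨d / 2, d - d / 2, by omega⟩
  have hcount := card_isBipTree_depth_mul_le (R := R) r₀ hab
  have hp : 0 < Fintype.card L := Fintype.card_pos_iff.2 ⟨r₀⟩
  generalize #{q : (L ⊕ R → L ⊕ R) × (L ⊕ R) |
    IsBipTree r₀ q.1 ∧ depth (Sum.inl r₀) q.1 q.2 = a + b} = W at hcount ⊢
  generalize Fintype.card L = p at *
  generalize Fintype.card R = q at *
  have hp₁ : (1 : ℝ) ≤ p := by exact_mod_cast hp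
  have hn : 1 ≤ n := hp₁.trans hLn
  have hK : 0 < K := pos_of_mul_pos_left (by linarith) (Nat.cast_nonneg p)
  have hq : (0 : ℝ) < q := pos_of_mul_pos_right (by linarith) hK.le
  have hW : (W : ℝ) * n ^ 2 ≤
      2 * K ^ 2 * (p ^ q * q ^ p) * (a + b : ℕ) * exp (-((a : ℝ) * (a + 1)) / (2 * p)) := by
    refine le_of_mul_le_mul_right ?_ (by positivity : (0 : ℝ) < p * q)
    calc
      (W : ℝ) * n ^ 2 * (p * q) = (W * (p * q) : ℕ) * n ^ 2 := by
        push_cast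
        ring
      _ ≤ _ := by
        grw [hcount]
        exact_mod_cast
          descFactorial_mul_pow_mul_add_mul_sq_le hab hd hp (by linarith) hL hR
  rw [div_mul_eq_mul_div, le_div_iff₀ (by positivity)]
  calc
    _ ≤ 2 * K ^ 2 * (p ^ q * q ^ p) * (a + b : ℕ) *
          (3 * exp (-((a + b : ℕ) : ℝ) ^ 2 / (8 * n))) := by
      grw [hW, exp_neg_mul_succ_le hab (by linarith) hLn hn]
    _ = _ := by ring

open Classical in
lemma sum_depth_pow_le (r₀ : L) (hLn : Fintype.card L ≤ n) (hL : n ≤ K * Fintype.card L)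
    (hR : n ≤ K * Fintype.card R) {k : ℕ} (hk : 0 < k) :
    ∑ F with IsBipTree r₀ F, ∑ v : L ⊕ R, (depth (Sum.inl r₀) F v : ℝ) ^ k ≤
      96 * K ^ 2 * ((Fintype.card L : ℝ) ^ Fintype.card R * Fintype.card R ^ Fintype.card L) / n *
        √(8 * n * k) ^ k := by
  have hn : 0 < n := (Nat.cast_pos.2 (Fintype.card_pos_iff.2 ⟨r₀⟩)).trans_le hLn
  have hcard (d : ℕ) (hd : 0 < d) := card_isBipTree_depth_le r₀ hLn hL hR hd
  set Q : ℝ := (Fintype.card L : ℝ) ^ Fintype.card R * Fintype.card R ^ Fintype.card L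
  let P : Finset ((L ⊕ R → L ⊕ R) × (L ⊕ R)) := {q | IsBipTree r₀ q.1}
  let g (q : (L ⊕ R → L ⊕ R) × (L ⊕ R)) : ℕ := depth (Sum.inl r₀) q.1 q.2
  have fiber_le (d : ℕ) : ∑ q ∈ P with g q = d, (g q : ℝ) ^ k ≤
      6 * K ^ 2 * Q / n ^ 2 * √(8 * n * k) ^ k * (d * exp (-(d : ℝ) ^ 2 / (16 * n))) := by
    calc
      _ = #{q ∈ P | g q = d} * (d : ℝ) ^ k := by
        rw [← nsmul_eq_mul]
        exact sum_eq_card_nsmul fun q hq ↦ by rw [(mem_filter.1 hq).2]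
      _ ≤ 6 * K ^ 2 * Q / n ^ 2 * (d * exp (-(d : ℝ) ^ 2 / (8 * n))) * d ^ k := by
        rcases Nat.eq_zero_or_pos d with rfl | hd
        · simp [hk.ne']
        gcongr
        simpa [P, g, filter_filter] using hcard d hd
      _ = 6 * K ^ 2 * Q / n ^ 2 * d * (d ^ k * exp (-(d : ℝ) ^ 2 / (8 * n))) := by ring
      _ ≤ 6 * K ^ 2 * Q / n ^ 2 * d *
            (√(8 * n * k) ^ k * exp (-(d : ℝ) ^ 2 / (2 * (8 * n)))) := by
        grw [pow_mul_exp_neg_sq_le (by positivity) (Nat.cast_nonneg d) hk]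
      _ = _ := by ring_nf
  calc
    _ = ∑ q ∈ P, (g q : ℝ) ^ k := by
      rw [← sum_product']
      refine sum_congr ?_ fun _ _ ↦ rfl
      ext
      simp [P]
    _ = ∑ d ∈ range (P.sup g + 1), ∑ q ∈ P with g q = d, (g q : ℝ) ^ k :=
      (sum_fiberwise_of_maps_to
        (fun q hq ↦ mem_range.2 (Nat.lt_succ_of_le (le_sup (f := g) hq))) _).symm
    _ ≤ 6 * K ^ 2 * Q / n ^ 2 * √(8 * n * k) ^ k *
          ∑ d ∈ range (P.sup g + 1), (d : ℝ) * exp (-(d : ℝ) ^ 2 / (16 * n)) := by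
      rw [mul_sum]
      exact sum_le_sum fun d _ ↦ fiber_le d
    _ ≤ 6 * K ^ 2 * Q / n ^ 2 * √(8 * n * k) ^ k * (16 * n) := by
      gcongr
      exact sum_mul_exp_neg_sq_le (by positivity) _
    _ = _ := by
      field_simp
      ring

end DepthMoments

section CountingBound

lemma choose_sum_le {ι : Type*} (s : Finset ι) (f : ι → ℕ) (l : ℕ) :
    ((∑ x ∈ s, f x).choose (l + 1) : ℝ) ≤
      (#s : ℝ) ^ l / (l + 1).factorial * ∑ x ∈ s, (f x : ℝ) ^ (l + 1) := by
  have hpow := pow_sum_le_card_mul_sum_pow (s := s) (f := fun x ↦ (f x : ℝ))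
    (fun x _ ↦ Nat.cast_nonneg _) l
  calc
    _ ≤ ((∑ x ∈ s, f x : ℕ) : ℝ) ^ (l + 1) / (l + 1).factorial := Nat.choose_le_pow_div _ _
    _ ≤ (#s : ℝ) ^ l * (∑ x ∈ s, (f x : ℝ) ^ (l + 1)) / (l + 1).factorial := by
      push_cast
      gcongr
    _ = _ := by ring

variable {i j l : ℕ}

lemma bipGraphCount_le_pow {K : ℝ} (hi : 0 < i) (hij : (i + j : ℝ) ≤ K * i)
    (hji : (i + j : ℝ) ≤ K * j) :
    (bipGraphCount i j (i + j + l) : ℝ) ≤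
      (i + j : ℝ) ^ l * (96 * K ^ 2 * ((i : ℝ) ^ j * j ^ i) / (i + j)) *
        (9 * √(i + j) / √(l + 1 : ℕ)) ^ (l + 1) := by
  classical
  have hmoment := sum_depth_pow_le (L := Fin i) (R := Fin j) (n := i + j) ⟨0, hi⟩
    (by simp) (by simpa using hij) (by simpa using hji) l.succ_pos
  simp only [Fintype.card_fin] at hmoment
  calc
    _ ≤ ∑ F with IsBipTree (R := Fin j) (⟨0, hi⟩ : Fin i) F,
          ((∑ v, depth (Sum.inl ⟨0, hi⟩) F v).choose (l + 1) : ℝ) := by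
      exact_mod_cast bipGraphCount_le ⟨0, hi⟩ l
    _ ≤ ∑ F with IsBipTree (R := Fin j) (⟨0, hi⟩ : Fin i) F, (i + j : ℝ) ^ l / (l + 1).factorial *
          ∑ v, (depth (Sum.inl ⟨0, hi⟩) F v : ℝ) ^ (l + 1) := by
      refine sum_le_sum fun F _ ↦ (choose_sum_le univ _ l).trans_eq ?_
      simp
    _ ≤ (i + j : ℝ) ^ l / (l + 1).factorial *
          (96 * K ^ 2 * ((i : ℝ) ^ j * j ^ i) / (i + j) *
            √(8 * (i + j) * (l + 1 : ℕ)) ^ (l + 1)) := by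
      rw [← mul_sum]
      refine mul_le_mul_of_nonneg_left ((Eq.le ?_).trans hmoment) (by positivity)
      congr!
    _ = (i + j : ℝ) ^ l * (96 * K ^ 2 * ((i : ℝ) ^ j * j ^ i) / (i + j)) *
          (√(8 * (i + j) * (l + 1 : ℕ)) ^ (l + 1) / (l + 1).factorial) := by ring
    _ ≤ _ := by
      gcongr
      exact sqrt_pow_div_factorial_le (by positivity) l.succ_pos

lemma pow_mul_sqrt_pow_le_rpow {n A Q : ℝ} (hn : 0 < n) (hA : 1 ≤ A) (hQ : 0 ≤ Q) (hl : 0 < l) :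
    n ^ l * (A * Q / n) * (9 * √n / √(l + 1 : ℕ)) ^ (l + 1) ≤
      Q * n ^ ((3 * (l : ℝ) - 1) / 2) * ((81 * A) ^ 2 / l) ^ ((l : ℝ) / 2) := by
  have hpow_n : n ^ ((3 * (l : ℝ) - 1) / 2) = √n ^ (3 * l - 1) := by
    rw [rpow_div_two_eq_sqrt _ hn.le, ← rpow_natCast, Nat.cast_sub (by omega)]
    push_cast
    rfl
  have hpow_l : ((81 * A) ^ 2 / (l : ℝ)) ^ ((l : ℝ) / 2) = (81 * A) ^ l / √l ^ l := by
    rw [rpow_div_two_eq_sqrt _ (by positivity), rpow_natCast, sqrt_div (by positivity),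
      sqrt_sq (by positivity), div_pow]
  have hconst : A * 9 ^ (l + 1) ≤ (81 * A) ^ l := by
    calc
      A * 9 ^ (l + 1) ≤ A ^ l * 9 ^ (2 * l) := by
        gcongr
        · exact le_self_pow₀ hA hl.ne'
        · norm_num
        · omega
      _ = _ := by
        rw [pow_mul, mul_comm, ← mul_pow]
        norm_num
  have hsqrt_l : √l ^ l ≤ √(l + 1 : ℕ) ^ (l + 1) := by
    calc
      √l ^ l ≤ √(l + 1 : ℕ) ^ l := by
        gcongr
        exact l.le_succ
      _ ≤ _ := pow_le_pow_right₀ (one_le_sqrt.2 (by simp)) l.le_succ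
  have hsqrt_n : n ^ l / n * √n ^ (l + 1) = √n ^ (3 * l - 1) := by
    calc
      _ = (√n ^ 2) ^ l / √n ^ 2 * √n ^ (l + 1) := by rw [sq_sqrt hn.le]
      _ = _ := by
        rw [div_mul_eq_mul_div, div_eq_iff (by positivity), ← pow_mul, ← pow_add, ← pow_add]
        congr 1
        omega
  calc
    _ = Q * (n ^ l / n * √n ^ (l + 1)) * (A * 9 ^ (l + 1) / √(l + 1 : ℕ) ^ (l + 1)) := by
      rw [div_pow, mul_pow]
      ring
    _ ≤ Q * √n ^ (3 * l - 1) * ((81 * A) ^ l / √l ^ l) := by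
      rw [hsqrt_n]
      gcongr
    _ = _ := by rw [hpow_n, hpow_l]

end CountingBound

theorem statement_12_general (K : ℝ) :
    ∃ c : ℝ, 0 < c ∧
      ∀ i j ℓ : ℕ, 0 < i → 0 < ℓ → (i : ℝ) ≤ K * j → (j : ℝ) ≤ K * i →
        (bipGraphCount i j (i + j + ℓ) : ℝ) ≤
          (i : ℝ) ^ j * (j : ℝ) ^ i * ((i : ℝ) + (j : ℝ)) ^ ((3 * (ℓ : ℝ) - 1) / 2) *
            (c / (ℓ : ℝ)) ^ ((ℓ : ℝ) / 2) := by
  have hA : 1 ≤ 96 * (|K| + 1) ^ 2 := by nlinarith [abs_nonneg K]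
  refine ⟨(81 * (96 * (|K| + 1) ^ 2)) ^ 2, by positivity, fun i j ℓ hi hℓ hij hji ↦ ?_⟩
  have hKi : (i + j : ℝ) ≤ (|K| + 1) * i := by nlinarith [le_abs_self K]
  have hKj : (i + j : ℝ) ≤ (|K| + 1) * j := by nlinarith [le_abs_self K]
  exact (bipGraphCount_le_pow hi hKi hKj).trans
    (pow_mul_sqrt_pow_le_rpow (by positivity) hA (by positivity) hℓ)

/-- Theorem: there is a constant `c > 0` such that for all positive integers `i, j, ℓ` with
`ℓ ≤ ij − i − j` and `1/2 ≤ i/j ≤ 2`,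
`C(i,j,ℓ) ≤ i^j j^i (i+j)^{(3ℓ−1)/2} (c/ℓ)^{ℓ/2}`. -/
theorem statement_12 :
    ∃ c : ℝ, 0 < c ∧
      ∀ i j ℓ : ℕ, 0 < i → 0 < j → 0 < ℓ →
        (ℓ : ℤ) ≤ (i : ℤ) * (j : ℤ) - (i : ℤ) - (j : ℤ) →
        (1:ℝ)/2 ≤ (i : ℝ) / (j : ℝ) → (i : ℝ) / (j : ℝ) ≤ 2 →
        (bipGraphCount i j (i + j + ℓ) : ℝ) ≤
          (i : ℝ) ^ j * (j : ℝ) ^ i * ((i : ℝ) + (j : ℝ)) ^ ((3 * (ℓ : ℝ) - 1) / 2) *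
            (c / (ℓ : ℝ)) ^ ((ℓ : ℝ) / 2) := by
  obtain ⟨c, hc, hcount⟩ := statement_12_general 2
  refine ⟨c, hc, fun i j ℓ hi hj hℓ _ hlow hupp ↦ hcount i j ℓ hi hℓ ?_ ?_⟩
  · rwa [div_le_iff₀ (by positivity)] at hupp
  · rw [le_div_iff₀ (by positivity)] at hlow
    linarith
end
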